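/- Let q > 2 and let u : ℝ/ℤ → ℝⁿ be an embedded, regular C¹ curve with bil(u) < ∞ and ‖u'‖_{W^{1-1/q,q}} < ∞, and let v, w : ℝ/ℤ → ℝⁿ be C¹ with ‖v'‖_{W^{1-1/q,q}}, ‖w'‖_{W^{1-1/q,q}} < ∞. Then the mixed second partial derivative δ²TP(u)[v,w] = ∂²/∂s∂t TP(u + s v + t w) at (s,t) = (0,0) exists, and there is a constant C > 0 depending only on n and q such that |δ²TP(u)[v,w]| ≤ C · (bil u)^{2q+4} · ‖u'‖_{L^∞}^{q+2} · ‖u'‖_{W^{1-1/q,q}}^q · ‖v'‖_{W^{1-1/q,q}} · ‖w'‖_{W^{1-1/q,q}}. -/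

import Mathlib

open MeasureTheory Set Filter
open scoped RealInnerProductSpace ENNReal Topology

noncomputable section

/-- The distance on the circle `ℝ/ℤ` between the points represented by `x` and `y`. -/
def circDist (x y : ℝ) : ℝ := ‖((x - y : ℝ) : AddCircle (1 : ℝ))‖

/-- The representative of `z` modulo `1` lying in `(-1/2, 1/2]`. -/
def wrap (z : ℝ) : ℝ := 1 / 2 - Int.fract (1 / 2 - z)

/-- Squared wedge norm `|a ∧ b|² = |a|²|b|² - ⟨a,b⟩²`. -/
def wedgeSq {n : ℕ} (a b : EuclideanSpace ℝ (Fin n)) : ℝ :=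
  ‖a‖ ^ 2 * ‖b‖ ^ 2 - ⟪a, b⟫ ^ 2

/-- Wedge inner product `⟨a∧b, c∧d⟩ = ⟨a,c⟩⟨b,d⟩ - ⟨a,d⟩⟨b,c⟩`. -/
def wedgeInner {n : ℕ} (a b c d : EuclideanSpace ℝ (Fin n)) : ℝ :=
  ⟪a, c⟫ * ⟪b, d⟫ - ⟪a, d⟫ * ⟪b, c⟫

/-- Fundamental domain for double integrals over `(ℝ/ℤ)²`. -/
def unitSq : Set (ℝ × ℝ) := Ioc (0 : ℝ) 1 ×ˢ Ioc (0 : ℝ) 1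

/-- The tangent-point functional `TP` (extended-real-valued). -/
def TPe {n : ℕ} (q : ℝ) (u : ℝ → EuclideanSpace ℝ (Fin n)) : ℝ≥0∞ :=
  ENNReal.ofReal (1 / q) *
    ∫⁻ p in unitSq, ENNReal.ofReal
      (wedgeSq (deriv u p.2) (u p.1 - u p.2) ^ (q / 2) / ‖u p.1 - u p.2‖ ^ (2 * q))

/-- The tangent-point functional `TP` (real-valued). -/
def TPr {n : ℕ} (q : ℝ) (u : ℝ → EuclideanSpace ℝ (Fin n)) : ℝ := (TPe q u).toReal

/-- The `q`-th power of the Sobolev–Slobodeckii seminorm `[f]_{W^{s,q}}` on `ℝ/ℤ`. -/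
def sobSemPow {n : ℕ} (s q : ℝ) (f : ℝ → EuclideanSpace ℝ (Fin n)) : ℝ≥0∞ :=
  ∫⁻ p in unitSq, ENNReal.ofReal (‖f p.1 - f p.2‖ ^ q / circDist p.1 p.2 ^ (1 + s * q))

/-- The `W^{s,q}`-norm `‖f‖_{L^q} + [f]_{W^{s,q}}`. -/
def Wnorm {n : ℕ} (s q : ℝ) (f : ℝ → EuclideanSpace ℝ (Fin n)) : ℝ :=
  (∫ x in Ioc (0 : ℝ) 1, ‖f x‖ ^ q) ^ (1 / q) + (sobSemPow s q f).toReal ^ (1 / q)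

/-- The bi-Lipschitz constant `bil(u) = sup_{x ≢ y} |x-y|_{ℝ/ℤ}/|u(x)-u(y)|`. -/
def bil {n : ℕ} (u : ℝ → EuclideanSpace ℝ (Fin n)) : ℝ≥0∞ :=
  ⨆ (x : ℝ) (y : ℝ) (_ : circDist x y ≠ 0),
    ENNReal.ofReal (circDist x y) / ENNReal.ofReal ‖u x - u y‖

/-- The `L^∞`-norm of the derivative of `u`. -/
def linfD {n : ℕ} (u : ℝ → EuclideanSpace ℝ (Fin n)) : ℝ≥0∞ :=
  ⨆ x : ℝ, (‖deriv u x‖₊ : ℝ≥0∞)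

/-- A periodic curve is embedded if it is injective on the circle `ℝ/ℤ`. -/
def Embedded {n : ℕ} (u : ℝ → EuclideanSpace ℝ (Fin n)) : Prop :=
  ∀ x y : ℝ, u x = u y → ((x : AddCircle (1 : ℝ)) = (y : AddCircle (1 : ℝ)))

/-- A curve is regular if `min_{ℝ/ℤ} |u'| > 0`. -/
def Regular {n : ℕ} (u : ℝ → EuclideanSpace ℝ (Fin n)) : Prop :=
  0 < ⨅ x : ℝ, ‖deriv u x‖

/-- Orthogonal projection of `b` onto the orthogonal complement of `ℝ a`. -/
def projPerp {n : ℕ} (a b : EuclideanSpace ℝ (Fin n)) : EuclideanSpace ℝ (Fin n) :=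
  b - (⟪b, a⟫ / ‖a‖ ^ 2) • a

/-- The classical tangent-point functional (extended-real-valued). -/
def TPcle {n : ℕ} (q : ℝ) (u : ℝ → EuclideanSpace ℝ (Fin n)) : ℝ≥0∞ :=
  ENNReal.ofReal (1 / q) *
    ∫⁻ p in unitSq, ENNReal.ofReal
      (‖projPerp (deriv u p.2) (u p.1 - u p.2)‖ ^ q / ‖u p.1 - u p.2‖ ^ (2 * q) *
        (‖deriv u p.1‖ * ‖deriv u p.2‖))

/-- The integrand of the functional `M(u; v, w)`. -/
def Mintegrand {n : ℕ} (q : ℝ) (u v w : ℝ → EuclideanSpace ℝ (Fin n)) (p : ℝ × ℝ) : ℝ :=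
  wedgeSq (deriv u p.2) (u p.1 - u p.2) ^ ((q - 2) / 2) / ‖u p.1 - u p.2‖ ^ (2 * q) *
    wedgeInner (deriv u p.2) (u p.1 - u p.2) (deriv v p.2)
      (w p.1 - w p.2 - wrap (p.1 - p.2) • deriv w p.2)

/-- The functional `M(u; v, w)` appearing in the first variation of `TP`. -/
def Mfun {n : ℕ} (q : ℝ) (u v w : ℝ → EuclideanSpace ℝ (Fin n)) : ℝ :=
  ∫ p in unitSq, Mintegrand q u v w p

/-- The integrand of the functional `A(u; v, w)`. -/
def Aintegrand {n : ℕ} (q : ℝ) (u v w : ℝ → EuclideanSpace ℝ (Fin n)) (p : ℝ × ℝ) : ℝ :=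
  wedgeSq (deriv u p.2) (u p.1 - u p.2) ^ (q / 2) / ‖u p.1 - u p.2‖ ^ (2 * q + 2) *
    ⟪v p.1 - v p.2, w p.1 - w p.2⟫

/-- The functional `A(u; v, w)` appearing in the first variation of `TP`. -/
def Afun {n : ℕ} (q : ℝ) (u v w : ℝ → EuclideanSpace ℝ (Fin n)) : ℝ :=
  ∫ p in unitSq, Aintegrand q u v w p

/-- The first variation `δTP(u)[w] = M(u;u,w) + M(u;w,u) - 2A(u;u,w)`. -/
def deltaTP {n : ℕ} (q : ℝ) (u w : ℝ → EuclideanSpace ℝ (Fin n)) : ℝ :=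
  Mfun q u u w + Mfun q u w u - 2 * Afun q u u w

/-- The `H²` inner product on periodic curves. -/
def H2inner (v w : ℝ → EuclideanSpace ℝ (Fin 3)) : ℝ :=
  ∫ x in Ioc (0 : ℝ) 1,
    (⟪v x, w x⟫ + ⟪deriv v x, deriv w x⟫ + ⟪deriv (deriv v) x, deriv (deriv w) x⟫)

/-- The total energy `E(u) = (κ/2)∫|u''|² + ρ TP(u)`. -/
def energyE (κ ρ q : ℝ) (u : ℝ → EuclideanSpace ℝ (Fin 3)) : ℝ :=
  κ / 2 * (∫ x in Ioc (0 : ℝ) 1, ‖deriv (deriv u) x‖ ^ 2) + ρ * TPr q u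

section Pointwise

variable {E F : Type*} [NormedAddCommGroup E] [InnerProductSpace ℝ E]
  [NormedAddCommGroup F] [InnerProductSpace ℝ F]

lemma HasDerivAt.norm_rpow_of_ne {f : ℝ → F} {f' : F} {s : ℝ} (hf : HasDerivAt f f' s)
    (h0 : f s ≠ 0) (c : ℝ) :
    HasDerivAt (fun x => ‖f x‖ ^ c) (c * ‖f s‖ ^ (c - 2) * ⟪f s, f'⟫) s := by
  have hpos : 0 < ‖f s‖ := norm_pos_iff.2 h0
  have h1 := hf.norm_sq.rpow_const (p := c / 2) (Or.inl (by positivity))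
  have h2 : ∀ x, (‖f x‖ ^ 2) ^ (c / 2) = ‖f x‖ ^ c := fun x => by
    rw [← Real.rpow_natCast, ← Real.rpow_mul (norm_nonneg _)]
    congr 1
    push_cast
    ring
  simp only [h2] at h1
  convert h1 using 1
  rw [← Real.rpow_natCast, ← Real.rpow_mul (norm_nonneg _)]
  have : ((2 : ℕ) : ℝ) * (c / 2 - 1) = c - 2 := by push_cast; ring
  rw [this]
  ring

lemma HasDerivAt.norm_rpow_of_one_lt {f : ℝ → F} {f' : F} {s : ℝ} (hf : HasDerivAt f f' s)
    {p : ℝ} (hp : 1 < p) :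
    HasDerivAt (fun x => ‖f x‖ ^ p) (p * ‖f s‖ ^ (p - 2) * ⟪f s, f'⟫) s := by
  have h := (hasFDerivAt_norm_rpow (f s) hp).comp_hasDerivAt s hf
  refine h.congr_deriv ?_
  simp [mul_assoc]

lemma hasFDerivAt_norm_rpow_smul_zero {p : ℝ} (hp : 0 < p) :
    HasFDerivAt (fun x : F => ‖x‖ ^ p • x) (0 : F →L[ℝ] F) 0 := by
  apply HasFDerivAt.of_isLittleO
  have h1 : Tendsto (fun x : F => ‖x‖ ^ p) (𝓝 0) (𝓝 0) := by
    have : ContinuousAt (fun x : F => ‖x‖ ^ p) 0 :=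
      (continuous_norm.continuousAt).rpow_const (Or.inr hp.le)
    simpa [ContinuousAt, Real.zero_rpow hp.ne'] using this
  have h2 : (fun x : F => ‖x‖ ^ p • x) =o[𝓝 0] fun x : F => (1 : ℝ) • x :=
    ((Asymptotics.isLittleO_one_iff ℝ).2 h1).smul_isBigO (Asymptotics.isBigO_refl _ _)
  simpa using h2

lemma HasDerivAt.exists_norm_rpow_smul {f : ℝ → F} {f' : F} {s : ℝ} (hf : HasDerivAt f f' s)
    {p : ℝ} (hp : 0 < p) :
    ∃ m, HasDerivAt (fun x => ‖f x‖ ^ p • f x) m s ∧ ‖m‖ ≤ (p + 1) * ‖f s‖ ^ p * ‖f'‖ := by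
  by_cases h0 : f s = 0
  · refine ⟨0, ?_, by rw [norm_zero]; positivity⟩
    have h := (hasFDerivAt_norm_rpow_smul_zero (F := F) hp)
    rw [← h0] at h
    simpa [Function.comp_def] using h.comp_hasDerivAt s hf
  · have hpos : 0 < ‖f s‖ := norm_pos_iff.2 h0
    refine ⟨_, (hf.norm_rpow_of_ne h0 p).smul hf, ?_⟩
    refine (norm_add_le _ _).trans ?_
    rw [norm_smul, norm_smul, norm_mul, norm_mul, Real.norm_eq_abs, Real.norm_eq_abs,
      Real.norm_eq_abs, abs_of_nonneg (Real.rpow_nonneg (norm_nonneg _) p),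
      abs_of_nonneg (Real.rpow_nonneg (norm_nonneg _) (p - 2)), abs_of_pos hp]
    have h3 : ‖f s‖ ^ p = ‖f s‖ ^ (p - 2) * ‖f s‖ * ‖f s‖ := by
      rw [mul_assoc, ← sq, ← Real.rpow_natCast, ← Real.rpow_add hpos]
      norm_num
    have h4 := abs_real_inner_le_norm (f s) f'
    calc _ ≤ ‖f s‖ ^ p * ‖f'‖ + p * ‖f s‖ ^ (p - 2) * (‖f s‖ * ‖f'‖) * ‖f s‖ := by
          gcongr
          exact h4
      _ = _ := by rw [h3]; ring

/-- The density `|B(a, r)|^q / |δ|^{2q}` for a bilinear map `B`. -/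
def density (q : ℝ) (B : E →L[ℝ] E →L[ℝ] F) (a r δ : E) : ℝ :=
  ‖B a r‖ ^ q * ‖δ‖ ^ (-(2 * q))

/-- `1/q` times the derivative of `density` at `(a, r, δ)` in the direction `(a₂, r₂, δ₂)`. -/
def densityDeriv (q : ℝ) (B : E →L[ℝ] E →L[ℝ] F) (a r δ a₂ r₂ δ₂ : E) : ℝ :=
  ⟪‖B a r‖ ^ (q - 2) • B a r, B a₂ r + B a r₂⟫ * ‖δ‖ ^ (-(2 * q)) -
    2 * (‖B a r‖ ^ q * (‖δ‖ ^ (-(2 * q + 2)) * ⟪δ, δ₂⟫))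

lemma HasDerivAt.bilin (B : E →L[ℝ] E →L[ℝ] F) {a r : ℝ → E} {a' r' : E} {s : ℝ}
    (ha : HasDerivAt a a' s) (hr : HasDerivAt r r' s) :
    HasDerivAt (fun x => B (a x) (r x)) (B a' (r s) + B (a s) r') s :=
  (B.hasFDerivAt.comp_hasDerivAt s ha).clm_apply hr

lemma hasDerivAt_density {q : ℝ} (hq : 2 < q) (B : E →L[ℝ] E →L[ℝ] F) {a r δ : ℝ → E}
    {a₂ r₂ δ₂ : E} {s : ℝ} (ha : HasDerivAt a a₂ s) (hr : HasDerivAt r r₂ s)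
    (hδ : HasDerivAt δ δ₂ s) (h0 : δ s ≠ 0) :
    HasDerivAt (fun t => density q B (a t) (r t) (δ t))
      (q * densityDeriv q B (a s) (r s) (δ s) a₂ r₂ δ₂) s := by
  have h1 := (HasDerivAt.bilin B ha hr).norm_rpow_of_one_lt (show 1 < q by linarith)
  have h2 := h1.mul (hδ.norm_rpow_of_ne h0 (-(2 * q)))
  refine h2.congr_deriv ?_
  simp only [densityDeriv, real_inner_smul_left]
  have : -(2 * q) - 2 = -(2 * q + 2) := by ring
  rw [this]
  ring

lemma exists_hasDerivAt_densityDeriv {q : ℝ} (hq : 2 < q) (B : E →L[ℝ] E →L[ℝ] F)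
    {a r δ : ℝ → E} {a₁ r₁ δ₁ : E} {s : ℝ} (ha : HasDerivAt a a₁ s) (hr : HasDerivAt r r₁ s)
    (hδ : HasDerivAt δ δ₁ s) (h0 : δ s ≠ 0) (a₂ r₂ δ₂ : E) :
    ∃ m, HasDerivAt (fun t => densityDeriv q B (a t) (r t) (δ t) a₂ r₂ δ₂) m s ∧
      |m| ≤ (q - 1) * ‖B (a s) (r s)‖ ^ (q - 2) * ‖B a₁ (r s) + B (a s) r₁‖ *
            ‖B a₂ (r s) + B (a s) r₂‖ * ‖δ s‖ ^ (-(2 * q)) +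
          ‖B (a s) (r s)‖ ^ (q - 1) * ‖B a₂ r₁ + B a₁ r₂‖ * ‖δ s‖ ^ (-(2 * q)) +
          2 * q * ‖B (a s) (r s)‖ ^ (q - 1) * ‖B a₂ (r s) + B (a s) r₂‖ *
            (‖δ s‖ ^ (-(2 * q + 1)) * ‖δ₁‖) +
          2 * q * ‖B (a s) (r s)‖ ^ (q - 1) * ‖B a₁ (r s) + B (a s) r₁‖ *
            (‖δ s‖ ^ (-(2 * q + 1)) * ‖δ₂‖) +
          (4 * q + 6) * ‖B (a s) (r s)‖ ^ q * (‖δ s‖ ^ (-(2 * q + 2)) * ‖δ₁‖ * ‖δ₂‖) := by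
  have hpos : 0 < ‖δ s‖ := norm_pos_iff.2 h0
  have hΩ := HasDerivAt.bilin B ha hr
  obtain ⟨m, hm, hmb⟩ := hΩ.exists_norm_rpow_smul (show 0 < q - 2 by linarith)
  have hΨ : HasDerivAt (fun x => B a₂ (r x) + B (a x) r₂) (B a₂ r₁ + B a₁ r₂) s := by
    have h1 := HasDerivAt.bilin B (hasDerivAt_const s a₂) hr
    have h2 := HasDerivAt.bilin B ha (hasDerivAt_const s r₂)
    simpa using h1.fun_add h2
  have hΩq := hΩ.norm_rpow_of_one_lt (show 1 < q by linarith)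
  have hd0 := hδ.norm_rpow_of_ne h0 (-(2 * q))
  have hd2 := hδ.norm_rpow_of_ne h0 (-(2 * q + 2))
  have hin : HasDerivAt (fun x => ⟪δ x, δ₂⟫) ⟪δ₁, δ₂⟫ s := by
    simpa using hδ.inner ℝ (hasDerivAt_const s δ₂)
  have key := ((hm.inner ℝ hΨ).fun_mul hd0).fun_sub ((hΩq.fun_mul (hd2.fun_mul hin)).const_mul 2)
  refine ⟨_, key, ?_⟩
  set Ω := B (a s) (r s)
  set Ω₁ := B a₁ (r s) + B (a s) r₁
  set Ψ := B a₂ (r s) + B (a s) r₂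
  set Ψ₁ := B a₂ r₁ + B a₁ r₂
  set e := ‖δ s‖
  have hP : 0 ≤ ‖Ω‖ ^ (q - 2) := by positivity
  have hQ : ‖Ω‖ ^ (q - 2) * ‖Ω‖ = ‖Ω‖ ^ (q - 1) := by
    rcases eq_or_lt_of_le (norm_nonneg Ω) with h | h
    · rw [← h, Real.zero_rpow (by linarith), Real.zero_rpow (by linarith), zero_mul]
    · rw [← Real.rpow_add_one h.ne']
      congr 1
      ring
  have e1 : e ^ (-(2 * q) - 2) * e = e ^ (-(2 * q + 1)) := by
    rw [← Real.rpow_add_one hpos.ne']; congr 1; ring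
  have e1' : e ^ (-(2 * q + 2)) * e = e ^ (-(2 * q + 1)) := by
    rw [← Real.rpow_add_one hpos.ne']; congr 1; ring
  have e2 : e ^ (-(2 * q + 2) - 2) * e * e = e ^ (-(2 * q + 2)) := by
    rw [← Real.rpow_add_one hpos.ne', ← Real.rpow_add_one hpos.ne']; congr 1; ring
  have i1 : |⟪‖Ω‖ ^ (q - 2) • Ω, Ψ₁⟫| ≤ ‖Ω‖ ^ (q - 1) * ‖Ψ₁‖ := by
    refine (abs_real_inner_le_norm _ _).trans_eq ?_
    rw [norm_smul, Real.norm_of_nonneg hP, hQ]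
  have i2 : |⟪m, Ψ⟫| ≤ (q - 1) * ‖Ω‖ ^ (q - 2) * ‖Ω₁‖ * ‖Ψ‖ := by
    refine (abs_real_inner_le_norm _ _).trans ?_
    have : q - 2 + 1 = q - 1 := by ring
    rw [this] at hmb
    gcongr
  have i3 : |⟪‖Ω‖ ^ (q - 2) • Ω, Ψ⟫| ≤ ‖Ω‖ ^ (q - 1) * ‖Ψ‖ := by
    refine (abs_real_inner_le_norm _ _).trans_eq ?_
    rw [norm_smul, Real.norm_of_nonneg hP, hQ]
  have i4 : |-(2 * q) * e ^ (-(2 * q) - 2) * ⟪δ s, δ₁⟫| ≤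
      2 * q * (e ^ (-(2 * q + 1)) * ‖δ₁‖) := by
    rw [abs_mul, abs_mul, abs_neg, abs_of_pos (show 0 < 2 * q by linarith),
      abs_of_pos (Real.rpow_pos_of_pos hpos _), ← e1]
    have := abs_real_inner_le_norm (δ s) δ₁
    calc _ ≤ 2 * q * e ^ (-(2 * q) - 2) * (e * ‖δ₁‖) := by gcongr
      _ = _ := by ring
  have i5 : |q * ‖Ω‖ ^ (q - 2) * ⟪Ω, Ω₁⟫| ≤ q * ‖Ω‖ ^ (q - 1) * ‖Ω₁‖ := by
    rw [abs_mul, abs_mul, abs_of_pos (show 0 < q by linarith), abs_of_nonneg hP, ← hQ]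
    have := abs_real_inner_le_norm Ω Ω₁
    calc _ ≤ q * ‖Ω‖ ^ (q - 2) * (‖Ω‖ * ‖Ω₁‖) := by gcongr
      _ = _ := by ring
  have i6 : |e ^ (-(2 * q + 2)) * ⟪δ s, δ₂⟫| ≤ e ^ (-(2 * q + 1)) * ‖δ₂‖ := by
    rw [abs_mul, abs_of_pos (Real.rpow_pos_of_pos hpos _), ← e1', mul_assoc]
    have := abs_real_inner_le_norm (δ s) δ₂
    gcongr
  have i7 : |-(2 * q + 2) * e ^ (-(2 * q + 2) - 2) * ⟪δ s, δ₁⟫ * ⟪δ s, δ₂⟫| ≤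
      (2 * q + 2) * (e ^ (-(2 * q + 2)) * ‖δ₁‖ * ‖δ₂‖) := by
    rw [abs_mul, abs_mul, abs_mul, abs_neg, abs_of_pos (show 0 < 2 * q + 2 by linarith),
      abs_of_pos (Real.rpow_pos_of_pos hpos _), ← e2]
    have h1 := abs_real_inner_le_norm (δ s) δ₁
    have h2 := abs_real_inner_le_norm (δ s) δ₂
    calc _ ≤ (2 * q + 2) * e ^ (-(2 * q + 2) - 2) * (e * ‖δ₁‖) * (e * ‖δ₂‖) := by gcongr
      _ = _ := by ring
  have i8 : |e ^ (-(2 * q + 2)) * ⟪δ₁, δ₂⟫| ≤ e ^ (-(2 * q + 2)) * ‖δ₁‖ * ‖δ₂‖ := by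
    rw [abs_mul, abs_of_pos (Real.rpow_pos_of_pos hpos _), mul_assoc]
    have := abs_real_inner_le_norm δ₁ δ₂
    gcongr
  have hq0 : (0 : ℝ) < q := by linarith
  have eP : 0 ≤ e ^ (-(2 * q)) := by positivity
  calc _ ≤ (|⟪‖Ω‖ ^ (q - 2) • Ω, Ψ₁⟫| + |⟪m, Ψ⟫|) * e ^ (-(2 * q)) +
        |⟪‖Ω‖ ^ (q - 2) • Ω, Ψ⟫| * |-(2 * q) * e ^ (-(2 * q) - 2) * ⟪δ s, δ₁⟫| +
        2 * (|q * ‖Ω‖ ^ (q - 2) * ⟪Ω, Ω₁⟫| * |e ^ (-(2 * q + 2)) * ⟪δ s, δ₂⟫| +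
          ‖Ω‖ ^ q * (|-(2 * q + 2) * e ^ (-(2 * q + 2) - 2) * ⟪δ s, δ₁⟫ * ⟪δ s, δ₂⟫| +
            |e ^ (-(2 * q + 2)) * ⟪δ₁, δ₂⟫|)) := by
        have nP : |e ^ (-(2 * q))| = e ^ (-(2 * q)) := abs_of_nonneg eP
        have nQ : |‖Ω‖ ^ q| = ‖Ω‖ ^ q := abs_of_nonneg (by positivity)
        refine (abs_sub _ _).trans (add_le_add ((abs_add_le _ _).trans (add_le_add ?_ ?_)) ?_)
        · rw [abs_mul, nP]
          gcongr
          exact abs_add_le _ _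
        · rw [abs_mul]
        · rw [abs_mul, abs_two]
          gcongr
          refine (abs_add_le _ _).trans (add_le_add ?_ ?_)
          · rw [abs_mul]
          · rw [abs_mul, nQ]
            gcongr
            exact abs_add_le _ _
    _ ≤ (‖Ω‖ ^ (q - 1) * ‖Ψ₁‖ + (q - 1) * ‖Ω‖ ^ (q - 2) * ‖Ω₁‖ * ‖Ψ‖) * e ^ (-(2 * q)) +
        ‖Ω‖ ^ (q - 1) * ‖Ψ‖ * (2 * q * (e ^ (-(2 * q + 1)) * ‖δ₁‖)) +
        2 * (q * ‖Ω‖ ^ (q - 1) * ‖Ω₁‖ * (e ^ (-(2 * q + 1)) * ‖δ₂‖) +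
          ‖Ω‖ ^ q * ((2 * q + 2) * (e ^ (-(2 * q + 2)) * ‖δ₁‖ * ‖δ₂‖) +
            e ^ (-(2 * q + 2)) * ‖δ₁‖ * ‖δ₂‖)) := by
        gcongr
    _ = _ := by ring

end Pointwise

section Bounds

variable {E F : Type*} [NormedAddCommGroup E] [InnerProductSpace ℝ E]
  [NormedAddCommGroup F] [InnerProductSpace ℝ F]

lemma rpow_neg_le_of_div_le {c d b e : ℝ} (hc : 0 ≤ c) (hd : 0 < d) (hb : 0 < b)
    (h : d / b ≤ e) : e ^ (-c) ≤ (b / d) ^ c := by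
  have h1 : 0 < d / b := by positivity
  calc e ^ (-c) ≤ (d / b) ^ (-c) := Real.rpow_le_rpow_of_nonpos h1 h (by linarith)
    _ = (b / d) ^ c := by
      rw [Real.rpow_neg h1.le, ← Real.inv_rpow h1.le, inv_div]

lemma mul_rpow_mul_div_rpow {q L α ρ b d : ℝ} (hL : 0 ≤ L) (hα : 0 ≤ α)
    (hρ : 0 ≤ ρ) (hb : 0 ≤ b) (hd : 0 ≤ d) :
    (L * α * ρ) ^ q * (b / d) ^ (2 * q) =
      (L * α) ^ q * b ^ (2 * q) * (ρ ^ q / d ^ (2 * q)) := by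
  rw [Real.mul_rpow (by positivity) hρ, Real.div_rpow hb hd]
  ring

lemma density_le {q : ℝ} (hq : 2 < q) {B : E →L[ℝ] E →L[ℝ] F}
    (hB : ∀ x y, ‖B x y‖ ≤ ‖x‖ * ‖y‖) {a r δ : E} {L α b d ρ : ℝ} (hb : 0 < b) (hd : 0 < d)
    (hL : ‖a‖ ≤ L) (hα : 0 ≤ α) (hρ : 0 ≤ ρ) (hr : ‖r‖ ≤ α * ρ) (hδ : d / b ≤ ‖δ‖) :
    density q B a r δ ≤ (L * α) ^ q * b ^ (2 * q) * (ρ ^ q / d ^ (2 * q)) := by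
  have hL0 : 0 ≤ L := (norm_nonneg _).trans hL
  rw [← mul_rpow_mul_div_rpow hL0 hα hρ hb.le hd.le, density]
  have h1 : ‖B a r‖ ≤ L * α * ρ := by
    refine (hB a r).trans ?_
    rw [mul_assoc]
    gcongr
  have h2 := rpow_neg_le_of_div_le (c := 2 * q) (by linarith) hd hb hδ
  gcongr

lemma norm_bilin_add_le {B : E →L[ℝ] E →L[ℝ] F} (hB : ∀ x y, ‖B x y‖ ≤ ‖x‖ * ‖y‖)
    {a r a' r' : E} {L α M ρ : ℝ} (ha : ‖a‖ ≤ L) (hr : ‖r‖ ≤ α * ρ)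
    (ha' : ‖a'‖ ≤ M) (hr' : ‖r'‖ ≤ M * ρ) :
    ‖B a' r + B a r'‖ ≤ M * ρ * (α + L) := by
  have hL0 : 0 ≤ L := (norm_nonneg _).trans ha
  have hM0 : 0 ≤ M := (norm_nonneg _).trans ha'
  calc _ ≤ ‖a'‖ * ‖r‖ + ‖a‖ * ‖r'‖ := (norm_add_le _ _).trans (add_le_add (hB _ _) (hB _ _))
    _ ≤ M * (α * ρ) + L * (M * ρ) := by gcongr
    _ = _ := by ring

lemma add_le_two_mul_mul_mul {L α b : ℝ} (hL : 0 ≤ L) (hα : 0 ≤ α) (hbL : 1 ≤ b * L)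
    (hbα : 1 ≤ b * α) : α + L ≤ 2 * (α * L * b) := by
  nlinarith [mul_le_mul_of_nonneg_left hbL hα, mul_le_mul_of_nonneg_left hbα hL]

lemma abs_densityDeriv_le {q : ℝ} (hq : 2 < q) {B : E →L[ℝ] E →L[ℝ] F}
    (hB : ∀ x y, ‖B x y‖ ≤ ‖x‖ * ‖y‖) {a r δ a₂ r₂ δ₂ : E} {L α b d ρ M : ℝ}
    (hb : 0 < b) (hd : 0 < d) (hL : ‖a‖ ≤ L) (hα : 0 ≤ α) (hρ : 0 ≤ ρ) (hr : ‖r‖ ≤ α * ρ)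
    (hδ : d / b ≤ ‖δ‖) (hbL : 1 ≤ b * L) (hbα : 1 ≤ b * α)
    (ha₂ : ‖a₂‖ ≤ M) (hr₂ : ‖r₂‖ ≤ M * ρ) (hδ₂ : ‖δ₂‖ ≤ M * d) :
    |densityDeriv q B a r δ a₂ r₂ δ₂| ≤
      4 * (L * α) ^ q * b ^ (2 * q + 1) * M * (ρ ^ q / d ^ (2 * q)) := by
  have hL0 : 0 ≤ L := (norm_nonneg _).trans hL
  have hM0 : 0 ≤ M := (norm_nonneg _).trans ha₂
  have hδ0 : 0 < ‖δ‖ := lt_of_lt_of_le (by positivity) hδ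
  have h1 : ‖B a r‖ ≤ L * α * ρ := by
    refine (hB a r).trans ?_
    rw [mul_assoc]
    gcongr
  have hΨ := norm_bilin_add_le hB hL hr ha₂ hr₂
  set Ω := B a r
  set Ψ := B a₂ r + B a r₂
  set X := L * α * ρ
  have hX : 0 ≤ X := by positivity
  have hH := add_le_two_mul_mul_mul hL0 hα hbL hbα
  set Z := (b / d) ^ (2 * q)
  have hZ : 0 ≤ Z := by positivity
  have e0 : ‖δ‖ ^ (-(2 * q)) ≤ Z := rpow_neg_le_of_div_le (by linarith) hd hb hδ
  have e2 : ‖δ‖ ^ (-(2 * q + 2)) * ‖δ‖ ≤ Z * (b / d) := by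
    rw [← Real.rpow_add_one hδ0.ne', ← Real.rpow_add_one (by positivity)]
    convert rpow_neg_le_of_div_le (c := 2 * q + 1) (by linarith) hd hb hδ using 2
    ring
  have hP : ‖Ω‖ ^ (q - 2) ≤ X ^ (q - 2) := by gcongr
  have hXq : X ^ q = X ^ (q - 2) * X * X := by
    rcases eq_or_lt_of_le hX with h | h
    · rw [← h, Real.zero_rpow (by linarith), mul_zero]
    · rw [mul_assoc, ← sq, ← Real.rpow_natCast, ← Real.rpow_add h]
      norm_num
  have hΩq : ‖Ω‖ ^ q ≤ X ^ q := by gcongr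
  have t1 : |⟪‖Ω‖ ^ (q - 2) • Ω, Ψ⟫ * ‖δ‖ ^ (-(2 * q))| ≤
      X ^ (q - 2) * X * (M * ρ * (2 * (α * L * b))) * Z := by
    rw [abs_mul, abs_of_nonneg (Real.rpow_nonneg (norm_nonneg _) (-(2 * q)))]
    have := abs_real_inner_le_norm (‖Ω‖ ^ (q - 2) • Ω) Ψ
    rw [norm_smul, Real.norm_of_nonneg (by positivity)] at this
    calc _ ≤ ‖Ω‖ ^ (q - 2) * ‖Ω‖ * ‖Ψ‖ * ‖δ‖ ^ (-(2 * q)) := by gcongr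
      _ ≤ X ^ (q - 2) * X * (M * ρ * (α + L)) * Z := by gcongr
      _ ≤ _ := by gcongr
  have t2 : |2 * (‖Ω‖ ^ q * (‖δ‖ ^ (-(2 * q + 2)) * ⟪δ, δ₂⟫))| ≤
      2 * (X ^ q * (Z * (b / d) * (M * d))) := by
    rw [abs_mul, abs_mul, abs_mul, abs_of_nonneg (Real.rpow_nonneg (norm_nonneg _) _),
      abs_of_nonneg (Real.rpow_nonneg (norm_nonneg _) _), abs_two]
    have := abs_real_inner_le_norm δ δ₂
    calc _ ≤ 2 * (‖Ω‖ ^ q * (‖δ‖ ^ (-(2 * q + 2)) * (‖δ‖ * ‖δ₂‖))) := by gcongr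
      _ = 2 * (‖Ω‖ ^ q * (‖δ‖ ^ (-(2 * q + 2)) * ‖δ‖ * ‖δ₂‖)) := by ring
      _ ≤ _ := by gcongr
  have hfin := mul_rpow_mul_div_rpow (q := q) hL0 hα hρ hb.le hd.le
  rw [Real.rpow_add_one hb.ne']
  calc _ ≤ X ^ (q - 2) * X * (M * ρ * (2 * (α * L * b))) * Z +
        2 * (X ^ q * (Z * (b / d) * (M * d))) := (abs_sub _ _).trans (add_le_add t1 t2)
    _ = 4 * b * M * (X ^ q * Z) := by
      rw [hXq]
      field_simp
      simp only [X]
      ring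
    _ = _ := by
      rw [hfin]
      ring

set_option maxHeartbeats 800000 in
lemma exists_hasDerivAt_densityDeriv_le {q : ℝ} (hq : 2 < q) {B : E →L[ℝ] E →L[ℝ] F}
    (hB : ∀ x y, ‖B x y‖ ≤ ‖x‖ * ‖y‖) {a r δ : ℝ → E} {a₁ r₁ δ₁ a₂ r₂ δ₂ : E}
    {s L α b d ρ M N : ℝ} (hda : HasDerivAt a a₁ s) (hdr : HasDerivAt r r₁ s)
    (hdδ : HasDerivAt δ δ₁ s) (hb : 0 < b) (hd : 0 < d) (hL : ‖a s‖ ≤ L) (hα : 0 ≤ α)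
    (hρ : 0 ≤ ρ) (hr : ‖r s‖ ≤ α * ρ) (hδ : d / b ≤ ‖δ s‖) (hbL : 1 ≤ b * L) (hbα : 1 ≤ b * α)
    (ha₁ : ‖a₁‖ ≤ N) (hr₁ : ‖r₁‖ ≤ N * ρ) (hδ₁ : ‖δ₁‖ ≤ N * d)
    (ha₂ : ‖a₂‖ ≤ M) (hr₂ : ‖r₂‖ ≤ M * ρ) (hδ₂ : ‖δ₂‖ ≤ M * d) :
    ∃ m, HasDerivAt (fun t => densityDeriv q B (a t) (r t) (δ t) a₂ r₂ δ₂) m s ∧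
      |m| ≤ (16 * q + 4) * (L * α) ^ q * b ^ (2 * q + 2) * N * M * (ρ ^ q / d ^ (2 * q)) := by
  have hL0 : 0 ≤ L := (norm_nonneg _).trans hL
  have hM0 : 0 ≤ M := (norm_nonneg _).trans ha₂
  have hN0 : 0 ≤ N := (norm_nonneg _).trans ha₁
  have hδ0 : 0 < ‖δ s‖ := lt_of_lt_of_le (by positivity) hδ
  obtain ⟨m, hm, hmb⟩ := exists_hasDerivAt_densityDeriv hq B hda hdr hdδ (norm_pos_iff.1 hδ0)
    a₂ r₂ δ₂
  refine ⟨m, hm, hmb.trans ?_⟩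
  have h1 : ‖B (a s) (r s)‖ ≤ L * α * ρ := by
    refine (hB _ _).trans ?_
    rw [mul_assoc]
    gcongr
  have hΩ₁ := norm_bilin_add_le hB hL hr ha₁ hr₁
  have hΨ := norm_bilin_add_le hB hL hr ha₂ hr₂
  have hΨ₁ : ‖B a₂ r₁ + B a₁ r₂‖ ≤ 2 * (N * M * ρ) := by
    calc _ ≤ ‖a₂‖ * ‖r₁‖ + ‖a₁‖ * ‖r₂‖ :=
          (norm_add_le _ _).trans (add_le_add (hB _ _) (hB _ _))
      _ ≤ M * (N * ρ) + N * (M * ρ) := by gcongr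
      _ = _ := by ring
  set Ω := B (a s) (r s)
  set Ω₁ := B a₁ (r s) + B (a s) r₁
  set Ψ := B a₂ (r s) + B (a s) r₂
  set Ψ₁ := B a₂ r₁ + B a₁ r₂
  set X := L * α * ρ with hXdef
  have hX : 0 ≤ X := by positivity
  have hH := add_le_two_mul_mul_mul hL0 hα hbL hbα
  have hHb : α * L ≤ (α * L * b) ^ 2 := by
    have := one_le_mul_of_one_le_of_one_le hbL hbα
    nlinarith [mul_le_mul_of_nonneg_left this (mul_nonneg hα hL0)]
  set H := α * L * b with hHdef
  have hH0 : 0 ≤ H := by positivity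
  set Z := (b / d) ^ (2 * q)
  have hZ : 0 ≤ Z := by positivity
  have e0 : ‖δ s‖ ^ (-(2 * q)) ≤ Z := rpow_neg_le_of_div_le (by linarith) hd hb hδ
  have e1 : ‖δ s‖ ^ (-(2 * q + 1)) ≤ Z * (b / d) := by
    rw [← Real.rpow_add_one (by positivity)]
    exact rpow_neg_le_of_div_le (by linarith) hd hb hδ
  have e2 : ‖δ s‖ ^ (-(2 * q + 2)) ≤ Z * (b / d) * (b / d) := by
    rw [← Real.rpow_add_one (by positivity), ← Real.rpow_add_one (by positivity)]
    convert rpow_neg_le_of_div_le (c := 2 * q + 2) (by linarith) hd hb hδ using 2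
    ring
  set P := X ^ (q - 2)
  have hP0 : 0 ≤ P := by positivity
  have hP : ‖Ω‖ ^ (q - 2) ≤ P := Real.rpow_le_rpow (norm_nonneg _) h1 (by linarith)
  have hXq : X ^ q = P * X * X := by
    rcases eq_or_lt_of_le hX with h | h
    · rw [← h, Real.zero_rpow (by linarith), mul_zero]
    · rw [mul_assoc, ← sq, ← Real.rpow_natCast, ← Real.rpow_add h]
      norm_num
  have hXq1 : X ^ (q - 1) = P * X := by
    rcases eq_or_lt_of_le hX with h | h
    · rw [← h, Real.zero_rpow (by linarith), mul_zero]
    · rw [← Real.rpow_add_one h.ne']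
      congr 1
      ring
  have hΩq : ‖Ω‖ ^ q ≤ P * X * X := hXq ▸ Real.rpow_le_rpow (norm_nonneg _) h1 (by linarith)
  have hΩq1 : ‖Ω‖ ^ (q - 1) ≤ P * X :=
    hXq1 ▸ Real.rpow_le_rpow (norm_nonneg _) h1 (by linarith)
  have hfin := mul_rpow_mul_div_rpow (q := q) hL0 hα hρ hb.le hd.le
  have hq1 : 0 ≤ q - 1 := by linarith
  have hbq : b ^ (2 * q + 2) = b ^ (2 * q) * b ^ 2 := by
    rw [← Real.rpow_natCast, ← Real.rpow_add hb]
    norm_num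
  set K := P * ρ ^ 2 * N * M * Z
  have hK : 0 ≤ K := by positivity
  have hbd : b / d * d = b := by field_simp
  calc _ ≤ (q - 1) * P * (N * ρ * (2 * H)) * (M * ρ * (2 * H)) * Z +
          (P * X) * (2 * (N * M * ρ)) * Z +
          2 * q * (P * X) * (M * ρ * (2 * H)) * (Z * (b / d) * (N * d)) +
          2 * q * (P * X) * (N * ρ * (2 * H)) * (Z * (b / d) * (M * d)) +
          (4 * q + 6) * (P * X * X) * (Z * (b / d) * (b / d) * (N * d) * (M * d)) := by
        gcongr
        · exact hΩ₁.trans (by gcongr)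
        · exact hΨ.trans (by gcongr)
        · exact hΨ.trans (by gcongr)
        · exact hΩ₁.trans (by gcongr)
    _ = K * ((16 * q + 2) * H ^ 2 + 2 * (α * L)) := by
      have a1 : Z * (b / d) * (N * d) = Z * b * N := by field_simp
      have a2 : Z * (b / d) * (M * d) = Z * b * M := by field_simp
      have a3 : Z * (b / d) * (b / d) * (N * d) * (M * d) = Z * b ^ 2 * N * M := by field_simp
      rw [a1, a2, a3, hXdef, hHdef]
      simp only [K]
      ring
    _ ≤ K * ((16 * q + 2) * H ^ 2 + 2 * H ^ 2) := by gcongr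
    _ = (16 * q + 4) * b ^ 2 * N * M * (X ^ q * Z) := by
      rw [hXq, hXdef, hHdef]
      simp only [K]
      ring
    _ = _ := by
      rw [hfin, hbq]
      ring

end Bounds

section Wedge

/-- The wedge product as a bilinear map into the space of antisymmetric arrays. -/
lemma exists_wedge (n : ℕ) : ∃ B : EuclideanSpace ℝ (Fin n) →L[ℝ] EuclideanSpace ℝ (Fin n) →L[ℝ]
    EuclideanSpace ℝ (Fin n × Fin n), ∀ a b, ‖B a b‖ ^ 2 = wedgeSq a b := by
  let f : EuclideanSpace ℝ (Fin n) →ₗ[ℝ] EuclideanSpace ℝ (Fin n) →ₗ[ℝ]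
      EuclideanSpace ℝ (Fin n × Fin n) := LinearMap.mk₂ ℝ
    (fun a b => WithLp.toLp 2 fun p => (√2)⁻¹ * (a p.1 * b p.2 - a p.2 * b p.1))
    (fun a b c => by ext p; simp; ring) (fun a b c => by ext p; simp; ring)
    (fun a b c => by ext p; simp; ring) (fun a b c => by ext p; simp; ring)
  refine ⟨f.toContinuousBilinearMap, fun a b => ?_⟩
  have h2 : (√2)⁻¹ ^ 2 = (1 / 2 : ℝ) := by rw [inv_pow, Real.sq_sqrt (by norm_num)]; norm_num
  have e : ∀ x y : EuclideanSpace ℝ (Fin n), ⟪x, y⟫ = ∑ i, x i * y i := fun x y => by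
    simp [PiLp.inner_apply, mul_comm]
  rw [EuclideanSpace.norm_sq_eq, wedgeSq, EuclideanSpace.norm_sq_eq, EuclideanSpace.norm_sq_eq, e]
  simp only [LinearMap.toContinuousBilinearMap_apply, f, LinearMap.mk₂_apply, Real.norm_eq_abs,
    sq_abs, mul_pow, h2, Fintype.sum_prod_type]
  have h3 : ∀ i j, (1 / 2 : ℝ) * (a i * b j - a j * b i) ^ 2 =
      1 / 2 * (a i ^ 2 * b j ^ 2) + 1 / 2 * (a j ^ 2 * b i ^ 2) -
        (a i * b i) * (a j * b j) := fun i j => by ring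
  simp only [h3, Finset.sum_add_distrib, Finset.sum_sub_distrib]
  rw [sq (∑ i, a i * b i), Finset.sum_mul_sum, Finset.sum_mul_sum,
    Finset.sum_comm (f := fun i j => 1 / 2 * (a j ^ 2 * b i ^ 2))]
  simp only [← Finset.mul_sum]
  ring

end Wedge

section Circle

lemma wrap_eq (z : ℝ) : wrap z = z + ⌊1 / 2 - z⌋ := by
  rw [wrap, Int.fract]
  ring

lemma wrap_of_mem {z : ℝ} (hz : z ∈ Ioc (-(1 / 2) : ℝ) (1 / 2)) : wrap z = z := by
  rw [wrap, Int.fract_eq_self.2 ⟨by linarith [hz.2], by linarith [hz.1]⟩]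
  ring

lemma abs_wrap_le (z : ℝ) : |wrap z| ≤ 1 / 2 := by
  have h0 := Int.fract_nonneg (1 / 2 - z)
  have h1 := Int.fract_lt_one (1 / 2 - z)
  rw [wrap, abs_le]
  constructor <;> linarith

lemma wrap_add_one (z : ℝ) : wrap (z + 1) = wrap z := by
  have : (1 / 2 : ℝ) - (z + 1) = 1 / 2 - z - (1 : ℤ) := by push_cast; ring
  rw [wrap, wrap, this, Int.fract_sub_intCast]

lemma circDist_eq (x y : ℝ) : circDist x y = |wrap (x - y)| := by
  have h : ((x - y : ℝ) : AddCircle (1 : ℝ)) = (wrap (x - y) : ℝ) := by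
    rw [wrap_eq, AddCircle.coe_add, left_eq_add]
    exact (AddCircle.coe_eq_zero_iff 1).2 ⟨⌊1 / 2 - (x - y)⌋, by simp⟩
  rw [circDist, h]
  exact (AddCircle.norm_coe_eq_abs_iff 1 one_ne_zero).2 (by simpa using abs_wrap_le _)

lemma circDist_le (x y : ℝ) : circDist x y ≤ |x - y| := by
  rw [circDist]
  exact QuotientAddGroup.norm_mk_le_norm

lemma Function.Periodic.eq_wrap {β : Type*} {f : ℝ → β} (hf : Function.Periodic f 1) (x y : ℝ) :
    f x = f (y + wrap (x - y)) := by
  have := hf.int_mul ⌊1 / 2 - (x - y)⌋ x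
  rw [mul_one] at this
  rw [wrap_eq, ← this]
  congr 1
  ring

lemma measurable_wrap : Measurable wrap := by
  unfold wrap
  fun_prop

lemma measurable_circDist : Measurable fun p : ℝ × ℝ => circDist p.1 p.2 := by
  simp only [circDist_eq]
  have := measurable_wrap
  fun_prop

lemma setLIntegral_Ioc_periodic {f : ℝ → ℝ≥0∞} (hf : Function.Periodic f 1) (a b c : ℝ) :
    ∫⁻ x in Ioc a (a + 1), f (c + x) = ∫⁻ x in Ioc b (b + 1), f x := by
  have h1 : ∀ a b : ℝ, ∫⁻ x in Ioc a (a + 1), f x = ∫⁻ x in Ioc b (b + 1), f x := fun a b => by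
    refine (isAddFundamentalDomain_Ioc one_pos a).setLIntegral_eq
      (isAddFundamentalDomain_Ioc one_pos b) f ?_
    rintro ⟨_, k, rfl⟩ x
    have := hf.int_mul k x
    simpa [AddSubmonoid.vadd_def, AddSubgroup.vadd_def, add_comm] using this
  have h2 := (measurePreserving_add_left volume c).setLIntegral_comp_preimage_emb
    (measurableEmbedding_addLeft c) f (Ioc (c + a) (c + a + 1))
  have h3 : (fun x => c + x) ⁻¹' Ioc (c + a) (c + a + 1) = Ioc a (a + 1) := by
    ext x
    simp [add_assoc]
  rw [h3] at h2
  rw [h2, h1 _ b]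

end Circle

section Hardy

lemma setLIntegral_unitSq {G : ℝ × ℝ → ℝ≥0∞} (hG : Measurable G) :
    ∫⁻ p in unitSq, G p = ∫⁻ y in Ioc (0 : ℝ) 1, ∫⁻ x in Ioc (0 : ℝ) 1, G (x, y) := by
  rw [unitSq, Measure.volume_eq_prod, ← Measure.prod_restrict, lintegral_prod_symm _ hG.aemeasurable]

lemma setLIntegral_unitSq_eq_centered {G : ℝ × ℝ → ℝ≥0∞} (hG : Measurable G)
    (hper : ∀ x y, G (x + 1, y) = G (x, y)) :
    ∫⁻ p in unitSq, G p =
      ∫⁻ y in Ioc (0 : ℝ) 1, ∫⁻ z in Ioc (-(1 / 2) : ℝ) (1 / 2), G (y + z, y) := by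
  rw [setLIntegral_unitSq hG]
  congr 1 with y
  have := setLIntegral_Ioc_periodic (f := fun x => G (x, y)) (fun x => hper x y) (-(1 / 2)) 0 y
  norm_num at this ⊢
  exact this.symm

lemma setLIntegral_comp_mul_le {k : ℝ → ℝ≥0∞} (hk : Measurable k) {θ : ℝ}
    (hθ : θ ∈ Ioc (0 : ℝ) 1) :
    ∫⁻ z in Ioc (-(1 / 2) : ℝ) (1 / 2), k (θ * z) ≤
      ENNReal.ofReal θ⁻¹ * ∫⁻ z in Ioc (-(1 / 2) : ℝ) (1 / 2), k z := by
  set S := Ioc (-(1 / 2) : ℝ) (1 / 2)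
  have hS : MeasurableSet S := measurableSet_Ioc
  calc ∫⁻ z in S, k (θ * z) ≤ ∫⁻ z, S.indicator k (θ * z) := by
        rw [← lintegral_indicator hS]
        refine lintegral_mono fun z => ?_
        by_cases hz : z ∈ S
        · have hz' : θ * z ∈ S := by
            constructor
            · nlinarith [hz.1, hz.2, hθ.1, hθ.2]
            · nlinarith [hz.1, hz.2, hθ.1, hθ.2]
          simp [hz, hz']
        · simp [hz]
    _ = ∫⁻ z, S.indicator k z ∂(Measure.map (θ * ·) volume) := by
        rw [lintegral_map (hk.indicator hS) (by fun_prop)]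
    _ = _ := by
        rw [Real.map_volume_mul_left hθ.1.ne', lintegral_smul_measure, lintegral_indicator hS,
          abs_of_pos (inv_pos.2 hθ.1), smul_eq_mul]

variable {E : Type*} [NormedAddCommGroup E] [NormedSpace ℝ E]

/-- The first-order Taylor remainder on the circle. -/
def taylorRem (f : ℝ → E) (x y : ℝ) : E := f x - f y - wrap (x - y) • deriv f y

lemma ofReal_norm_integral_rpow_le {h : ℝ → E} (hh : Continuous h) {q : ℝ}
    (hq : 1 ≤ q) :
    ENNReal.ofReal (‖∫ t in (0 : ℝ)..1, h t‖ ^ q) ≤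
      ∫⁻ t in Ioc (0 : ℝ) 1, ENNReal.ofReal (‖h t‖ ^ q) := by
  have hq0 : 0 ≤ q := by linarith
  have hc : Continuous fun t => ‖h t‖ ^ q := hh.norm.rpow_const fun _ => Or.inr hq0
  have hi : IntegrableOn (fun t => ‖h t‖ ^ q) (Ioc 0 1) :=
    (hc.integrableOn_Icc).mono_set Ioc_subset_Icc_self
  have hi' : IntegrableOn (fun t => ‖h t‖) (Ioc 0 1) :=
    (hh.norm.integrableOn_Icc).mono_set Ioc_subset_Icc_self
  rw [← ofReal_integral_eq_lintegral_ofReal hi (ae_of_all _ fun t => by positivity)]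
  apply ENNReal.ofReal_le_ofReal
  have : IsProbabilityMeasure (volume.restrict (Ioc (0 : ℝ) 1)) := ⟨by simp⟩
  have key := (convexOn_rpow hq).map_integral_le (μ := volume.restrict (Ioc (0 : ℝ) 1))
    (f := fun t => ‖h t‖) (continuousOn_id.rpow_const fun _ _ => Or.inr hq0) isClosed_Ici
    (ae_of_all _ fun t => norm_nonneg _) hi' hi
  refine le_trans ?_ key
  gcongr
  rw [intervalIntegral.integral_of_le zero_le_one]
  exact norm_integral_le_integral_norm _

lemma taylor_eq_integral [CompleteSpace E] {f : ℝ → E} (hf : ContDiff ℝ 1 f) (y z : ℝ) :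
    f (y + z) - f y - z • deriv f y =
      ∫ θ in (0 : ℝ)..1, z • (deriv f (y + θ * z) - deriv f y) := by
  have hd : Continuous (deriv f) := hf.continuous_deriv le_rfl
  have h1 : ∀ θ ∈ uIcc (0 : ℝ) 1, HasDerivAt (fun θ : ℝ => f (y + θ * z) - θ • z • deriv f y)
      (z • (deriv f (y + θ * z) - deriv f y)) θ := fun θ _ => by
    have h2 : HasDerivAt (fun θ : ℝ => y + θ * z) z θ := by
      simpa using ((hasDerivAt_id θ).mul_const z).const_add y
    have h3 : HasDerivAt f (deriv f (y + θ * z)) (y + θ * z) :=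
      (hf.differentiable one_ne_zero _).hasDerivAt
    have h4 := (h3.scomp θ h2).sub ((hasDerivAt_id θ).smul_const (z • deriv f y))
    refine h4.congr_deriv ?_
    rw [one_smul, smul_sub]
  rw [intervalIntegral.integral_eq_sub_of_hasDerivAt h1
    (Continuous.intervalIntegrable (by fun_prop) _ _)]
  simp
  abel

lemma ofReal_taylor_le [CompleteSpace E] {f : ℝ → E} (hf : ContDiff ℝ 1 f) {q : ℝ}
    (hq : 1 ≤ q) (y z : ℝ) :
    ENNReal.ofReal (‖f (y + z) - f y - z • deriv f y‖ ^ q / |z| ^ (2 * q)) ≤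
      ∫⁻ θ in Ioc (0 : ℝ) 1, ENNReal.ofReal (θ ^ q) *
        ENNReal.ofReal (‖deriv f (y + θ * z) - deriv f y‖ ^ q / |θ * z| ^ q) := by
  have hd : Continuous (deriv f) := hf.continuous_deriv le_rfl
  rcases eq_or_ne z 0 with rfl | hz0
  · simp [Real.zero_rpow (show q ≠ 0 by linarith)]
  have hzp : 0 < |z| := abs_pos.2 hz0
  rw [taylor_eq_integral hf]
  calc _ = ENNReal.ofReal (|z| ^ (2 * q))⁻¹ * ENNReal.ofReal
        (‖∫ θ in (0 : ℝ)..1, z • (deriv f (y + θ * z) - deriv f y)‖ ^ q) := by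
        rw [← ENNReal.ofReal_mul (by positivity), div_eq_inv_mul]
    _ ≤ ENNReal.ofReal (|z| ^ (2 * q))⁻¹ * ∫⁻ θ in Ioc (0 : ℝ) 1, ENNReal.ofReal
        (‖z • (deriv f (y + θ * z) - deriv f y)‖ ^ q) := by
        gcongr
        exact ofReal_norm_integral_rpow_le (by fun_prop) hq
    _ = ∫⁻ θ in Ioc (0 : ℝ) 1, ENNReal.ofReal (|z| ^ (2 * q))⁻¹ * ENNReal.ofReal
        (‖z • (deriv f (y + θ * z) - deriv f y)‖ ^ q) := by
        rw [lintegral_const_mul' _ _ ENNReal.ofReal_ne_top]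
    _ = _ := by
        refine setLIntegral_congr_fun measurableSet_Ioc fun θ hθ => ?_
        have hθ0 : 0 < θ := hθ.1
        rw [← ENNReal.ofReal_mul (by positivity), ← ENNReal.ofReal_mul (by positivity),
          norm_smul, Real.norm_eq_abs, abs_mul, abs_of_pos hθ0,
          Real.mul_rpow (abs_nonneg _) (norm_nonneg _), Real.mul_rpow hθ0.le (abs_nonneg _),
          show 2 * q = q + q by ring, Real.rpow_add hzp]
        congr 1
        field_simp

lemma lintegral_lintegral_dilation_le {k : ℝ → ℝ≥0∞} (hk : Measurable k) {q : ℝ} (hq : 1 ≤ q) :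
    ∫⁻ z in Ioc (-(1 / 2) : ℝ) (1 / 2), ∫⁻ θ in Ioc (0 : ℝ) 1,
      ENNReal.ofReal (θ ^ q) * k (θ * z) ≤ ∫⁻ z in Ioc (-(1 / 2) : ℝ) (1 / 2), k z := by
  have hm : Measurable fun p : ℝ × ℝ => ENNReal.ofReal (p.2 ^ q) * k (p.2 * p.1) := by
    fun_prop
  calc _ = ∫⁻ θ in Ioc (0 : ℝ) 1, ∫⁻ z in Ioc (-(1 / 2) : ℝ) (1 / 2),
        ENNReal.ofReal (θ ^ q) * k (θ * z) := lintegral_lintegral_swap hm.aemeasurable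
    _ ≤ ∫⁻ θ in Ioc (0 : ℝ) 1, ∫⁻ z in Ioc (-(1 / 2) : ℝ) (1 / 2), k z := by
        refine setLIntegral_mono' measurableSet_Ioc fun θ hθ => ?_
        rw [lintegral_const_mul' _ _ ENNReal.ofReal_ne_top]
        calc _ ≤ ENNReal.ofReal (θ ^ q) * (ENNReal.ofReal θ⁻¹ *
              ∫⁻ z in Ioc (-(1 / 2) : ℝ) (1 / 2), k z) := by
              gcongr
              exact setLIntegral_comp_mul_le hk hθ
          _ ≤ 1 * ∫⁻ z in Ioc (-(1 / 2) : ℝ) (1 / 2), k z := by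
              rw [← mul_assoc]
              gcongr
              rw [← ENNReal.ofReal_mul (Real.rpow_nonneg hθ.1.le _), ENNReal.ofReal_le_one,
                ← div_eq_mul_inv, div_le_one hθ.1]
              exact Real.rpow_le_self_of_le_one hθ.1.le hθ.2 hq
          _ = _ := one_mul _
    _ = _ := by simp

lemma lintegral_taylorRem_le {n : ℕ} {f : ℝ → EuclideanSpace ℝ (Fin n)} (hf : ContDiff ℝ 1 f)
    (hper : Function.Periodic f 1) {q : ℝ} (hq : 2 < q) :
    ∫⁻ p in unitSq, ENNReal.ofReal
        (‖taylorRem f p.1 p.2‖ ^ q / circDist p.1 p.2 ^ (2 * q)) ≤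
      sobSemPow (1 - 1 / q) q (deriv f) := by
  have hd : Continuous (deriv f) := hf.continuous_deriv le_rfl
  have hdper : Function.Periodic (deriv f) 1 := fun x => by
    rw [← deriv_comp_add_const]
    congr 1
    exact funext hper
  have hexp : 1 + (1 - 1 / q) * q = q := by field_simp; ring
  have hmw := measurable_wrap
  have hmc := measurable_circDist
  have hcper : ∀ x y, circDist (x + 1) y = circDist x y := fun x y => by
    rw [circDist_eq, circDist_eq, show x + 1 - y = x - y + 1 by ring, wrap_add_one]
  have hmf := hf.continuous.measurable
  have hmd := hd.measurable
  rw [sobSemPow, hexp, setLIntegral_unitSq_eq_centered, setLIntegral_unitSq_eq_centered]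
  rotate_left
  · fun_prop
  · intro x y
    simp only [hcper, hdper x]
  · unfold taylorRem
    fun_prop
  · intro x y
    simp only [hcper, taylorRem, hper x, show x + 1 - y = x - y + 1 by ring, wrap_add_one]
  have hcd : ∀ y, ∀ z ∈ Ioc (-(1 / 2) : ℝ) (1 / 2), circDist (y + z) y = |z| := fun y z hz => by
    rw [circDist_eq, add_sub_cancel_left, wrap_of_mem hz]
  refine lintegral_mono fun y => ?_
  have hk : Measurable fun z => ENNReal.ofReal (‖deriv f (y + z) - deriv f y‖ ^ q / |z| ^ q) := by
    fun_prop
  calc _ ≤ ∫⁻ z in Ioc (-(1 / 2) : ℝ) (1 / 2), ∫⁻ θ in Ioc (0 : ℝ) 1, ENNReal.ofReal (θ ^ q) *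
        ENNReal.ofReal (‖deriv f (y + θ * z) - deriv f y‖ ^ q / |θ * z| ^ q) := by
        refine setLIntegral_mono' measurableSet_Ioc fun z hz => ?_
        dsimp only
        rw [hcd y z hz, taylorRem, add_sub_cancel_left, wrap_of_mem hz]
        exact ofReal_taylor_le hf (by linarith) y z
    _ ≤ _ := lintegral_lintegral_dilation_le hk (by linarith)
    _ = _ := by
        refine setLIntegral_congr_fun measurableSet_Ioc fun z hz => ?_
        dsimp only
        rw [hcd y z hz]

end Hardy

section Sobolev

variable {E : Type*} [NormedAddCommGroup E] [NormedSpace ℝ E]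

lemma enorm_average_deriv_le {h : ℝ → E} {q p N r : ℝ} (hpq : p.HolderConjugate q) (hN : 0 < N)
    (hr : r ∈ Ioc (0 : ℝ) 1) :
    ‖(r ^ 2)⁻¹ • ∫ t in (0 : ℝ)..r, (h r - h t)‖ₑ ≤ ENNReal.ofReal (N * r ^ (1 - p)) +
      ENNReal.ofReal (N * (N ^ q)⁻¹) *
        ∫⁻ t in Ioc (0 : ℝ) 1, ENNReal.ofReal (‖h r - h t‖ ^ q / |r - t| ^ q) := by
  have hr0 : 0 < r := hr.1
  have hpt : ∀ t ∈ Ioc 0 r, ENNReal.ofReal (r ^ 2)⁻¹ * ‖h r - h t‖ₑ ≤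
      ENNReal.ofReal (N * r ^ (-p)) + ENNReal.ofReal (N * (N ^ q)⁻¹) *
        ENNReal.ofReal (‖h r - h t‖ ^ q / |r - t| ^ q) := fun t ht => by
    rw [← ofReal_norm, ← ENNReal.ofReal_mul (by positivity),
      ← ENNReal.ofReal_mul (by positivity), ← ENNReal.ofReal_add (by positivity) (by positivity)]
    apply ENNReal.ofReal_le_ofReal
    rcases eq_or_lt_of_le ht.2 with rfl | htr
    · simp
      positivity
    have hd : 0 < r - t := by linarith
    have hy := Real.young_inequality_of_nonneg (a := r⁻¹) (b := ‖h r - h t‖ / |r - t| / N)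
      (by positivity) (by positivity) hpq
    have hp1 := hpq.lt
    have hq1 := hpq.symm.lt
    have y1 : (r⁻¹) ^ p / p ≤ r ^ (-p) := by
      rw [Real.rpow_neg hr0.le, ← Real.inv_rpow hr0.le]
      exact div_le_self (by positivity) hp1.le
    have y2 : (‖h r - h t‖ / |r - t| / N) ^ q / q ≤
        (N ^ q)⁻¹ * (‖h r - h t‖ ^ q / |r - t| ^ q) := by
      refine (div_le_self (by positivity) hq1.le).trans_eq ?_
      rw [Real.div_rpow (by positivity) hN.le, Real.div_rpow (norm_nonneg _) (abs_nonneg _)]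
      ring
    have hlow : (r ^ 2)⁻¹ * ‖h r - h t‖ ≤ N * (r⁻¹ * (‖h r - h t‖ / |r - t| / N)) := by
      have : |r - t| ≤ r := by
        rw [abs_of_pos hd]
        linarith [ht.1]
      have hd' : 0 < |r - t| := by rwa [abs_of_pos hd]
      calc _ = r⁻¹ * (‖h r - h t‖ / r) := by field_simp
        _ ≤ r⁻¹ * (‖h r - h t‖ / |r - t|) := by gcongr
        _ = _ := by field_simp
    calc _ ≤ N * (r ^ (-p) + (N ^ q)⁻¹ * (‖h r - h t‖ ^ q / |r - t| ^ q)) :=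
          hlow.trans (by gcongr; linarith)
      _ = _ := by ring
  calc _ ≤ ENNReal.ofReal (r ^ 2)⁻¹ * ∫⁻ t in Ioc 0 r, ‖h r - h t‖ₑ := by
        rw [enorm_smul, Real.enorm_of_nonneg (by positivity),
          intervalIntegral.integral_of_le hr0.le]
        gcongr
        exact enorm_integral_le_lintegral_enorm _
    _ = ∫⁻ t in Ioc 0 r, ENNReal.ofReal (r ^ 2)⁻¹ * ‖h r - h t‖ₑ :=
        (lintegral_const_mul' _ _ ENNReal.ofReal_ne_top).symm
    _ ≤ ∫⁻ t in Ioc 0 r, (ENNReal.ofReal (N * r ^ (-p)) + ENNReal.ofReal (N * (N ^ q)⁻¹) *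
        ENNReal.ofReal (‖h r - h t‖ ^ q / |r - t| ^ q)) :=
        setLIntegral_mono' measurableSet_Ioc hpt
    _ = ENNReal.ofReal (N * r ^ (1 - p)) + ENNReal.ofReal (N * (N ^ q)⁻¹) *
        ∫⁻ t in Ioc 0 r, ENNReal.ofReal (‖h r - h t‖ ^ q / |r - t| ^ q) := by
        rw [lintegral_add_left measurable_const, lintegral_const_mul' _ _ ENNReal.ofReal_ne_top]
        congr 1
        simp only [lintegral_const, MeasurableSet.univ, Measure.restrict_apply, univ_inter,
          Real.volume_Ioc, sub_zero]
        rw [← ENNReal.ofReal_mul (by positivity), mul_assoc, ← Real.rpow_add_one hr0.ne']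
        congr 3
        ring
    _ ≤ _ := by
        gcongr
        exact hr.2

variable [CompleteSpace E]

lemma hasDerivAt_average {h : ℝ → E} (hh : Continuous h) {r : ℝ} (hr : r ≠ 0) :
    HasDerivAt (fun r : ℝ => r⁻¹ • ∫ t in (0 : ℝ)..r, h t)
      ((r ^ 2)⁻¹ • ∫ t in (0 : ℝ)..r, (h r - h t)) r := by
  have h1 : HasDerivAt (fun r : ℝ => ∫ t in (0 : ℝ)..r, h t) (h r) r :=
    intervalIntegral.integral_hasDerivAt_right (hh.intervalIntegrable _ _)
      (hh.stronglyMeasurableAtFilter _ _) hh.continuousAt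
  refine ((hasDerivAt_inv hr).smul h1).congr_deriv ?_
  rw [intervalIntegral.integral_sub (intervalIntegrable_const) (hh.intervalIntegrable _ _),
    intervalIntegral.integral_const, sub_zero, smul_sub, smul_smul, neg_smul, sub_eq_add_neg]
  congr 2
  field_simp

lemma tendsto_average {h : ℝ → E} (hh : Continuous h) :
    Tendsto (fun r : ℝ => r⁻¹ • ∫ t in (0 : ℝ)..r, h t) (𝓝[>] 0) (𝓝 (h 0)) := by
  have h1 : HasDerivAt (fun r : ℝ => ∫ t in (0 : ℝ)..r, h t) (h 0) 0 :=
    intervalIntegral.integral_hasDerivAt_right (hh.intervalIntegrable _ _)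
      (hh.stronglyMeasurableAtFilter _ _) hh.continuousAt
  have hsub : Ioi (0 : ℝ) ⊆ {0}ᶜ := fun x hx => ne_of_gt hx
  refine ((hasDerivAt_iff_tendsto_slope.1 h1).mono_left (nhdsWithin_mono 0 hsub)).congr fun r => ?_
  simp [slope_def_module]

lemma norm_le_of_sobSemPow_le {n : ℕ} {q : ℝ} (hq : 2 < q) :
    ∃ K : ℝ, 1 ≤ K ∧ ∀ (g : ℝ → EuclideanSpace ℝ (Fin n)) (N : ℝ), Continuous g →
      Function.Periodic g 1 → 0 < N → sobSemPow (1 - 1 / q) q g ≤ ENNReal.ofReal (N ^ q) →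
      ∫⁻ t in Ioc (0 : ℝ) 1, ENNReal.ofReal (‖g t‖ ^ q) ≤ ENNReal.ofReal (N ^ q) →
      ∀ x, ‖g x‖ ≤ K * N := by
  have hpq : (q / (q - 1)).HolderConjugate q :=
    (Real.HolderConjugate.conjExponent (by linarith)).symm
  set p := q / (q - 1)
  have hp2 : p < 2 := by
    rw [div_lt_iff₀ (by linarith)]
    linarith
  have hJi : IntegrableOn (fun r : ℝ => r ^ (1 - p)) (Ioc 0 1) := by
    have := intervalIntegral.intervalIntegrable_rpow' (a := 0) (b := 1)
      (show -1 < 1 - p by linarith)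
    rwa [intervalIntegrable_iff_integrableOn_Ioc_of_le zero_le_one] at this
  set J := ∫ r in Ioc (0 : ℝ) 1, r ^ (1 - p) with hJ
  have hJ0 : 0 ≤ J := setIntegral_nonneg measurableSet_Ioc fun r hr => Real.rpow_nonneg hr.1.le _
  refine ⟨J + 2, by linarith, fun g N hg hper hN hsob hLq x => ?_⟩
  have hexp : 1 + (1 - 1 / q) * q = q := by field_simp; ring
  set h : ℝ → EuclideanSpace ℝ (Fin n) := fun t => g (x + t) with hh
  have hhc : Continuous h := by fun_prop
  have hmg := hg.measurable
  have hmc := measurable_circDist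
  have hcper : ∀ x y, circDist (x + 1) y = circDist x y := fun x y => by
    rw [circDist_eq, circDist_eq, show x + 1 - y = x - y + 1 by ring, wrap_add_one]
  have hcomm : ∀ x y, circDist x y = circDist y x := fun x y => by
    rw [circDist, circDist, ← norm_neg, ← AddCircle.coe_neg, neg_sub]
  have hcper' : ∀ x y, circDist x (y + 1) = circDist x y := fun x y => by
    rw [hcomm, hcper, hcomm]
  have hdouble : ∫⁻ r in Ioc (0 : ℝ) 1, ∫⁻ t in Ioc (0 : ℝ) 1,
      ENNReal.ofReal (‖h r - h t‖ ^ q / |r - t| ^ q) ≤ ENNReal.ofReal (N ^ q) := by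
    refine le_trans ?_ hsob
    rw [sobSemPow, hexp, setLIntegral_unitSq (by fun_prop)]
    have e1 := setLIntegral_Ioc_periodic (f := fun y => ∫⁻ z in Ioc (0 : ℝ) 1,
      ENNReal.ofReal (‖g z - g y‖ ^ q / circDist z y ^ q))
      (fun y => by simp only [hper y, hcper']) 0 0 x
    rw [zero_add] at e1
    rw [← e1]
    refine setLIntegral_mono' measurableSet_Ioc fun r hr => ?_
    have e2 := setLIntegral_Ioc_periodic (f := fun z =>
      ENNReal.ofReal (‖g z - g (x + r)‖ ^ q / circDist z (x + r) ^ q))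
      (fun z => by simp only [hper z, hcper]) 0 0 x
    rw [zero_add] at e2
    rw [← e2]
    refine setLIntegral_mono' measurableSet_Ioc fun t ht => ?_
    apply ENNReal.ofReal_le_ofReal
    rw [norm_sub_rev]
    have hle := circDist_le (x + t) (x + r)
    rw [add_sub_add_left_eq_sub, abs_sub_comm] at hle
    rcases eq_or_lt_of_le (norm_nonneg ((x + t - (x + r) : ℝ) : AddCircle (1 : ℝ))) with h0 | h0
    · change 0 = circDist _ _ at h0
      have hz : x + t = x + r + (x + t - (x + r)) := by ring
      have hw : wrap (x + t - (x + r)) = 0 := by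
        rw [circDist_eq] at h0
        exact abs_eq_zero.1 h0.symm
      have : g (x + t) = g (x + r) := by
        rw [hper.eq_wrap (x + t) (x + r), hw, add_zero]
      simp only [hh, this, sub_self, norm_zero, Real.zero_rpow (show q ≠ 0 by linarith), zero_div,
        le_refl]
    · change 0 < circDist _ _ at h0
      gcongr
  set A : ℝ → EuclideanSpace ℝ (Fin n) := fun r => r⁻¹ • ∫ t in (0 : ℝ)..r, h t
  set A' : ℝ → EuclideanSpace ℝ (Fin n) := fun r =>
    (r ^ 2)⁻¹ • ∫ t in (0 : ℝ)..r, (h r - h t)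
  have hA'c : ContinuousOn A' (Ioi 0) := by
    have h1 : Continuous fun r : ℝ => ∫ t in (0 : ℝ)..r, (h r - h t) :=
      intervalIntegral.continuous_parametric_intervalIntegral_of_continuous (by fun_prop)
        continuous_id
    have h2 : ContinuousOn (fun r : ℝ => (r ^ 2)⁻¹) (Ioi 0) :=
      ContinuousOn.inv₀ (by fun_prop) fun r hr => pow_ne_zero 2 (ne_of_gt hr)
    exact h2.smul h1.continuousOn
  have hlint : ∫⁻ r in Ioc (0 : ℝ) 1, ‖A' r‖ₑ ≤ ENNReal.ofReal (N * (J + 1)) := by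
    calc _ ≤ ∫⁻ r in Ioc (0 : ℝ) 1, (ENNReal.ofReal (N * r ^ (1 - p)) +
          ENNReal.ofReal (N * (N ^ q)⁻¹) *
          ∫⁻ t in Ioc (0 : ℝ) 1, ENNReal.ofReal (‖h r - h t‖ ^ q / |r - t| ^ q)) :=
          setLIntegral_mono' measurableSet_Ioc fun r hr => enorm_average_deriv_le hpq hN hr
      _ = ENNReal.ofReal (N * J) + ENNReal.ofReal (N * (N ^ q)⁻¹) *
          ∫⁻ r in Ioc (0 : ℝ) 1, ∫⁻ t in Ioc (0 : ℝ) 1,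
            ENNReal.ofReal (‖h r - h t‖ ^ q / |r - t| ^ q) := by
          rw [lintegral_add_left (by fun_prop), lintegral_const_mul' _ _ ENNReal.ofReal_ne_top,
            hJ, ← integral_const_mul, ofReal_integral_eq_lintegral_ofReal (hJi.const_mul N)]
          filter_upwards [ae_restrict_mem measurableSet_Ioc] with r hr
          have := hr.1
          positivity
      _ ≤ ENNReal.ofReal (N * J) + ENNReal.ofReal (N * (N ^ q)⁻¹) * ENNReal.ofReal (N ^ q) := by
          gcongr
      _ = _ := by
          rw [← ENNReal.ofReal_mul (by positivity), ← ENNReal.ofReal_add (by positivity)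
            (by positivity)]
          congr 1
          field_simp
  have hdiff : ∀ ε ∈ Ioc (0 : ℝ) 1, ‖A 1 - A ε‖ ≤ N * (J + 1) := fun ε hε => by
    have hsub : uIcc ε 1 ⊆ Ioi 0 := by
      rw [uIcc_of_le hε.2]
      exact fun r hr => hε.1.trans_le hr.1
    rw [← intervalIntegral.integral_eq_sub_of_hasDerivAt (f := A) (f' := A')
      (fun r hr => hasDerivAt_average hhc (hsub hr).ne')
      ((hA'c.mono hsub).intervalIntegrable), intervalIntegral.integral_of_le hε.2]
    have : ‖∫ r in Ioc ε 1, A' r‖ₑ ≤ ENNReal.ofReal (N * (J + 1)) :=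
      (enorm_integral_le_lintegral_enorm _).trans
        ((lintegral_mono_set (Ioc_subset_Ioc_left hε.1.le)).trans hlint)
    rwa [← ofReal_norm, ENNReal.ofReal_le_ofReal_iff (by positivity)] at this
  have hlim : ‖A 1 - h 0‖ ≤ N * (J + 1) := by
    refine le_of_tendsto ((tendsto_const_nhds.sub (tendsto_average hhc)).norm) ?_
    filter_upwards [Ioc_mem_nhdsGT zero_lt_one] with ε hε using hdiff ε hε
  have hA1 : ‖A 1‖ ≤ N := by
    have h1 := ofReal_norm_integral_rpow_le hhc (show 1 ≤ q by linarith)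
    have h2 := setLIntegral_Ioc_periodic (f := fun t => ENNReal.ofReal (‖g t‖ ^ q))
      (fun t => by simp only [hper t]) 0 0 x
    rw [zero_add] at h2
    have h3 := h1.trans (h2.le.trans hLq)
    rw [ENNReal.ofReal_le_ofReal_iff (by positivity),
      Real.rpow_le_rpow_iff (norm_nonneg _) hN.le (by linarith)] at h3
    simpa [A] using h3
  have : g x = A 1 - (A 1 - h 0) := by simp [hh]
  rw [this]
  refine (norm_sub_le _ _).trans ?_
  linarith

end Sobolev

section Jets

section Normed

variable {E : Type*} [NormedAddCommGroup E]

/-- Componentwise bounds for a perturbation, relative to the weights `ρ` and `d`. -/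
def JetBound (M ρ d : ℝ) (ζ : E × E × E) : Prop :=
  ‖ζ.1‖ ≤ M ∧ ‖ζ.2.1‖ ≤ M * ρ ∧ ‖ζ.2.2‖ ≤ M * d

/-- Componentwise bounds for a nondegenerate triple, relative to the weights `ρ` and `d`. -/
def JetNondeg (L α b ρ d : ℝ) (z : E × E × E) : Prop :=
  ‖z.1‖ ≤ L ∧ ‖z.2.1‖ ≤ α * ρ ∧ d / b ≤ ‖z.2.2‖

lemma JetBound.add {M N ρ d : ℝ} {ζ ξ : E × E × E} (h : JetBound M ρ d ζ)
    (h' : JetBound N ρ d ξ) : JetBound (M + N) ρ d (ζ + ξ) := by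
  obtain ⟨h1, h2, h3⟩ := h
  obtain ⟨h1', h2', h3'⟩ := h'
  refine ⟨(norm_add_le _ _).trans (add_le_add h1 h1'), (norm_add_le _ _).trans ?_,
    (norm_add_le _ _).trans ?_⟩ <;> rw [add_mul] <;> gcongr

lemma JetNondeg.add {L α b ρ d η : ℝ} {z ζ : E × E × E} (h : JetNondeg L α b ρ d z)
    (h' : JetBound η ρ d ζ) (hb : 0 < b) (hρ : 0 ≤ ρ) (hd : 0 ≤ d) (hη : η ≤ (2 * b)⁻¹) :
    JetNondeg (L + (2 * b)⁻¹) (α + (2 * b)⁻¹) (2 * b) ρ d (z + ζ) := by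
  obtain ⟨h1, h2, h3⟩ := h
  obtain ⟨h1', h2', h3'⟩ := h'
  refine ⟨(norm_add_le _ _).trans (by linarith), (norm_add_le _ _).trans ?_, ?_⟩
  · rw [add_mul]
    have : η * ρ ≤ (2 * b)⁻¹ * ρ := by gcongr
    linarith
  · have h4 : η * d ≤ (2 * b)⁻¹ * d := by gcongr
    have h5 : ‖z.2.2‖ ≤ ‖(z + ζ).2.2‖ + ‖ζ.2.2‖ := by
      have : z.2.2 = (z + ζ).2.2 - ζ.2.2 := by simp
      nth_rw 1 [this]
      exact norm_sub_le _ _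
    have h6 : d / b = d / (2 * b) + (2 * b)⁻¹ * d := by field_simp; norm_num
    linarith

end Normed

variable {E F : Type*} [NormedAddCommGroup E] [InnerProductSpace ℝ E]
  [NormedAddCommGroup F] [InnerProductSpace ℝ F]

lemma JetBound.smul {M ρ d : ℝ} {ζ : E × E × E} (h : JetBound M ρ d ζ) (s : ℝ) :
    JetBound (|s| * M) ρ d (s • ζ) := by
  obtain ⟨h1, h2, h3⟩ := h
  refine ⟨?_, ?_, ?_⟩
  · rw [Prod.smul_fst, norm_smul, Real.norm_eq_abs]
    gcongr
  · rw [Prod.smul_snd, Prod.smul_fst, norm_smul, Real.norm_eq_abs, mul_assoc]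
    gcongr
  · rw [Prod.smul_snd, Prod.smul_snd, norm_smul, Real.norm_eq_abs, mul_assoc]
    gcongr

/-- `density` as a function on the space of triples `(a, r, δ)`. -/
def jetDensity (q : ℝ) (B : E →L[ℝ] E →L[ℝ] F) (z : E × E × E) : ℝ :=
  density q B z.1 z.2.1 z.2.2

/-- `densityDeriv` as a function on the space of pairs of triples. -/
def jetDensityDeriv (q : ℝ) (B : E →L[ℝ] E →L[ℝ] F) (z ζ : E × E × E) : ℝ :=
  densityDeriv q B z.1 z.2.1 z.2.2 ζ.1 ζ.2.1 ζ.2.2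

lemma hasDerivAt_line (z ζ : E × E × E) (s : ℝ) : HasDerivAt (fun t : ℝ => z + t • ζ) ζ s := by
  simpa using ((hasDerivAt_id s).smul_const ζ).const_add z

lemma hasDerivAt_jetDensity {q : ℝ} (hq : 2 < q) (B : E →L[ℝ] E →L[ℝ] F) {z ζ : E × E × E}
    {s : ℝ} (h0 : (z + s • ζ).2.2 ≠ 0) :
    HasDerivAt (fun t : ℝ => jetDensity q B (z + t • ζ))
      (q * jetDensityDeriv q B (z + s • ζ) ζ) s :=
  have h := hasDerivAt_line z ζ s
  hasDerivAt_density hq B h.fst h.snd.fst h.snd.snd h0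

lemma exists_hasDerivAt_jetDensityDeriv_le {q : ℝ} (hq : 2 < q) {B : E →L[ℝ] E →L[ℝ] F}
    (hB : ∀ x y, ‖B x y‖ ≤ ‖x‖ * ‖y‖) {z v w : E × E × E} {s L α b ρ d β γ : ℝ} (hb : 0 < b)
    (hd : 0 < d) (hα : 0 ≤ α) (hρ : 0 ≤ ρ) (hbL : 1 ≤ b * L) (hbα : 1 ≤ b * α)
    (hz : JetNondeg L α b ρ d (z + s • v)) (hv : JetBound β ρ d v) (hw : JetBound γ ρ d w) :
    ∃ m, HasDerivAt (fun t : ℝ => jetDensityDeriv q B (z + t • v) w) m s ∧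
      |m| ≤ (16 * q + 4) * (L * α) ^ q * b ^ (2 * q + 2) * β * γ * (ρ ^ q / d ^ (2 * q)) :=
  have hl := hasDerivAt_line z v s
  exists_hasDerivAt_densityDeriv_le hq hB hl.fst hl.snd.fst hl.snd.snd hb hd hz.1 hα hρ hz.2.1
    hz.2.2 hbL hbα hv.1 hv.2.1 hv.2.2 hw.1 hw.2.1 hw.2.2

section Measurability

variable [MeasurableSpace E] [BorelSpace E] [SecondCountableTopology E]

lemma measurable_jetDensity (q : ℝ) (B : E →L[ℝ] E →L[ℝ] F) : Measurable (jetDensity q B) := by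
  have h : Measurable fun z : E × E × E => ‖B z.1 z.2.1‖ :=
    Continuous.measurable (by fun_prop)
  unfold jetDensity density
  fun_prop

lemma Measurable.jetDensityDeriv {X : Type*} [MeasurableSpace X] {z ζ : X → E × E × E}
    (hz : Measurable z) (hζ : Measurable ζ) (q : ℝ) (B : E →L[ℝ] E →L[ℝ] F) :
    Measurable fun p => jetDensityDeriv q B (z p) (ζ p) := by
  have h : Measurable fun p => ‖B (z p).1 (z p).2.1‖ :=
    (show Continuous fun z : E × E × E => ‖B z.1 z.2.1‖ by fun_prop).measurable.comp hz
  have h1 : Measurable fun p =>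
      ⟪B (z p).1 (z p).2.1, B (ζ p).1 (z p).2.1 + B (z p).1 (ζ p).2.1⟫ :=
    (show Continuous fun y : (E × E × E) × (E × E × E) =>
      ⟪B y.1.1 y.1.2.1, B y.2.1 y.1.2.1 + B y.1.1 y.2.2.1⟫ by fun_prop).measurable.comp
      (hz.prodMk hζ)
  have h2 : Measurable fun p => ⟪(z p).2.2, (ζ p).2.2⟫ := by fun_prop
  unfold _root_.jetDensityDeriv densityDeriv
  simp only [real_inner_smul_left]
  fun_prop

end Measurability

lemma hasDerivAt_integral_of_ae_exists {X : Type*} [MeasurableSpace X] {μ : Measure X}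
    {G : ℝ → X → ℝ} {bound : X → ℝ} {s₀ ε : ℝ} (hε : 0 < ε)
    (hm : ∀ s, AEStronglyMeasurable (G s) μ) (hi : Integrable (G s₀) μ) (hb : Integrable bound μ)
    (h : ∀ᵐ p ∂μ, ∀ s ∈ Metric.ball s₀ ε, ∃ m, HasDerivAt (fun s => G s p) m s ∧ |m| ≤ bound p) :
    HasDerivAt (fun s => ∫ p, G s p ∂μ) (∫ p, deriv (fun s => G s p) s₀ ∂μ) s₀ := by
  have hd : ∀ᵐ p ∂μ, ∀ s ∈ Metric.ball s₀ ε,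
      HasDerivAt (fun s => G s p) (deriv (fun s => G s p) s) s := by
    filter_upwards [h] with p hp s hs
    obtain ⟨m, hm, -⟩ := hp s hs
    exact hm.differentiableAt.hasDerivAt
  have hb' : ∀ᵐ p ∂μ, ∀ s ∈ Metric.ball s₀ ε, ‖deriv (fun s => G s p) s‖ ≤ bound p := by
    filter_upwards [h] with p hp s hs
    obtain ⟨m, hm, hmb⟩ := hp s hs
    rwa [hm.deriv, Real.norm_eq_abs]
  have hlim : ∀ᵐ p ∂μ, Tendsto (fun k : ℕ => slope (fun s => G s p) s₀ (s₀ + 1 / ((k : ℝ) + 1)))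
      atTop (𝓝 (deriv (fun s => G s p) s₀)) := by
    have ht : Tendsto (fun k : ℕ => s₀ + 1 / ((k : ℝ) + 1)) atTop (𝓝[≠] s₀) := by
      refine tendsto_nhdsWithin_iff.2 ⟨?_, .of_forall fun k => ?_⟩
      · simpa using (tendsto_one_div_add_atTop_nhds_zero_nat (𝕜 := ℝ)).const_add s₀
      · have : (0 : ℝ) < 1 / ((k : ℝ) + 1) := by positivity
        simpa using this.ne'
    filter_upwards [hd] with p hp
    exact (hasDerivAt_iff_tendsto_slope.1 (hp s₀ (Metric.mem_ball_self hε))).comp ht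
  have hdm : AEStronglyMeasurable (fun p => deriv (fun s => G s p) s₀) μ := by
    refine aestronglyMeasurable_of_tendsto_ae atTop (fun k => ?_) hlim
    simp only [slope_def_field, div_eq_mul_inv]
    exact ((hm _).sub (hm _)).mul_const _
  exact (hasDerivAt_integral_of_dominated_loc_of_deriv_le (Metric.ball_mem_nhds s₀ hε)
    (.of_forall hm) hi hdm hb' hb hd).2

section SecondVariation

variable [MeasurableSpace E] [BorelSpace E] [SecondCountableTopology E]
  {X : Type*} [MeasurableSpace X] {μ : Measure X} {q : ℝ} {B : E →L[ℝ] E →L[ℝ] F}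
  {z v w : X → E × E × E} {ρ d : X → ℝ} {L α b β γ : ℝ}

lemma eventually_hasDerivAt_integral_jetDensity (hq : 2 < q)
    (hB : ∀ x y, ‖B x y‖ ≤ ‖x‖ * ‖y‖) (hz : Measurable z) (hv : Measurable v) (hw : Measurable w)
    (hL : 0 ≤ L) (hα : 0 ≤ α) (hb : 0 < b) (hβ : 0 < β) (hγ : 0 < γ)
    (h : ∀ᵐ p ∂μ, 0 < d p ∧ 0 ≤ ρ p ∧ JetNondeg L α b (ρ p) (d p) (z p) ∧
      JetBound β (ρ p) (d p) (v p) ∧ JetBound γ (ρ p) (d p) (w p))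
    (hΘ : Integrable (fun p => ρ p ^ q / d p ^ (2 * q)) μ) :
    ∀ᶠ s in 𝓝 (0 : ℝ), HasDerivAt (fun t : ℝ => ∫ p, jetDensity q B (z p + s • v p + t • w p) ∂μ)
      (q * ∫ p, jetDensityDeriv q B (z p + s • v p) (w p) ∂μ) 0 := by
  set ε := (2 * b)⁻¹ / (β + γ)
  have hε : 0 < ε := by positivity
  have hmd := measurable_jetDensity q B
  have hmeas : ∀ s t : ℝ, Measurable fun p => jetDensity q B (z p + s • v p + t • w p) :=
    fun s t => by fun_prop
  have hbL : 1 ≤ 2 * b * (L + (2 * b)⁻¹) := by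
    rw [mul_add, mul_inv_cancel₀ (by positivity)]
    have : 0 ≤ 2 * b * L := by positivity
    linarith
  have hbα : 1 ≤ 2 * b * (α + (2 * b)⁻¹) := by
    rw [mul_add, mul_inv_cancel₀ (by positivity)]
    have : 0 ≤ 2 * b * α := by positivity
    linarith
  filter_upwards [Metric.ball_mem_nhds (0 : ℝ) hε] with s hs
  have hs' : |s| < ε := by simpa using hs
  have hnd : ∀ᵐ p ∂μ, 0 < d p ∧ 0 ≤ ρ p ∧ JetBound γ (ρ p) (d p) (w p) ∧
      ∀ t ∈ Metric.ball (0 : ℝ) ε, JetNondeg (L + (2 * b)⁻¹) (α + (2 * b)⁻¹) (2 * b) (ρ p) (d p)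
        (z p + s • v p + t • w p) := by
    filter_upwards [h] with p ⟨hd, hρ, h1, h2, h3⟩
    refine ⟨hd, hρ, h3, fun t ht => ?_⟩
    have ht' : |t| < ε := by simpa using ht
    rw [add_assoc]
    refine h1.add ((h2.smul s).add (h3.smul t)) hb hρ hd.le ?_
    calc |s| * β + |t| * γ ≤ ε * β + ε * γ := by gcongr
      _ = (2 * b)⁻¹ := by simp only [ε]; field_simp
  have key := hasDerivAt_integral_of_ae_exists (μ := μ) (s₀ := 0) (ε := ε)
    (G := fun t p => jetDensity q B (z p + s • v p + t • w p))
    (bound := fun p => q * (4 * ((L + (2 * b)⁻¹) * (α + (2 * b)⁻¹)) ^ q * (2 * b) ^ (2 * q + 1) *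
      γ * (ρ p ^ q / d p ^ (2 * q)))) hε (fun t => (hmeas s t).aestronglyMeasurable) ?_
      ((hΘ.const_mul _).const_mul _) ?_
  · refine key.congr_deriv ?_
    rw [← integral_const_mul]
    refine integral_congr_ae ?_
    filter_upwards [hnd] with p ⟨hd, hρ, h3, h4⟩
    have h5 := (h4 0 (Metric.mem_ball_self hε)).2.2
    have h6 : 0 < d p / (2 * b) := by positivity
    have := (hasDerivAt_jetDensity hq B (z := z p + s • v p) (ζ := w p)
      (norm_pos_iff.1 (h6.trans_le h5))).deriv
    rw [zero_smul, add_zero] at this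
    exact this
  · refine Integrable.mono' (hΘ.const_mul (((L + (2 * b)⁻¹) * (α + (2 * b)⁻¹)) ^ q *
      (2 * b) ^ (2 * q))) (hmeas s 0).aestronglyMeasurable ?_
    filter_upwards [hnd] with p ⟨hd, hρ, h3, h4⟩
    obtain ⟨h5, h6, h7⟩ := h4 0 (Metric.mem_ball_self hε)
    rw [Real.norm_eq_abs, abs_of_nonneg (by unfold jetDensity density; positivity)]
    exact density_le hq hB (by positivity) hd h5 (by positivity) hρ h6 h7
  · filter_upwards [hnd] with p ⟨hd, hρ, ⟨h8, h9, h10⟩, h4⟩ t ht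
    obtain ⟨h5, h6, h7⟩ := h4 t ht
    have h0 : 0 < d p / (2 * b) := by positivity
    refine ⟨_, hasDerivAt_jetDensity hq B (norm_pos_iff.1 (h0.trans_le h7)), ?_⟩
    rw [abs_mul, abs_of_pos (show 0 < q by linarith)]
    gcongr
    exact abs_densityDeriv_le hq hB (by positivity) hd h5 (by positivity) hρ h6 h7 hbL hbα
      h8 h9 h10

lemma hasDerivAt_integral_jetDensityDeriv (hq : 2 < q)
    (hB : ∀ x y, ‖B x y‖ ≤ ‖x‖ * ‖y‖) (hz : Measurable z) (hv : Measurable v) (hw : Measurable w)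
    (hL : 0 ≤ L) (hα : 0 ≤ α) (hb : 0 < b) (hβ : 0 < β) (hbL : 1 ≤ b * L) (hbα : 1 ≤ b * α)
    (h : ∀ᵐ p ∂μ, 0 < d p ∧ 0 ≤ ρ p ∧ JetNondeg L α b (ρ p) (d p) (z p) ∧
      JetBound β (ρ p) (d p) (v p) ∧ JetBound γ (ρ p) (d p) (w p))
    (hΘ : Integrable (fun p => ρ p ^ q / d p ^ (2 * q)) μ) :
    ∃ m, HasDerivAt (fun s : ℝ => ∫ p, jetDensityDeriv q B (z p + s • v p) (w p) ∂μ) m 0 ∧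
      |m| ≤ (16 * q + 4) * (L * α) ^ q * b ^ (2 * q + 2) * β * γ *
        ∫ p, ρ p ^ q / d p ^ (2 * q) ∂μ := by
  obtain ⟨ε, hε, hεb⟩ : ∃ ε : ℝ, 0 < ε ∧ ε * β = (2 * b)⁻¹ :=
    ⟨(2 * b)⁻¹ / β, by positivity, div_mul_cancel₀ _ hβ.ne'⟩
  have hmeas : ∀ s : ℝ, Measurable fun p => jetDensityDeriv q B (z p + s • v p) (w p) :=
    fun s => (show Measurable fun p => z p + s • v p by fun_prop).jetDensityDeriv hw q B
  have hnd : ∀ᵐ p ∂μ, ∀ s ∈ Metric.ball (0 : ℝ) ε,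
      JetNondeg (L + (2 * b)⁻¹) (α + (2 * b)⁻¹) (2 * b) (ρ p) (d p) (z p + s • v p) := by
    filter_upwards [h] with p ⟨hd, hρ, h1, h2, h3⟩ s hs
    have hs' : |s| < ε := by simpa using hs
    refine h1.add (h2.smul s) hb hρ hd.le ?_
    rw [← hεb]
    gcongr
  have hbL' : 1 ≤ 2 * b * (L + (2 * b)⁻¹) := by
    rw [mul_add, mul_inv_cancel₀ (by positivity)]
    have : 0 ≤ 2 * b * L := by positivity
    linarith
  have hbα' : 1 ≤ 2 * b * (α + (2 * b)⁻¹) := by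
    rw [mul_add, mul_inv_cancel₀ (by positivity)]
    have : 0 ≤ 2 * b * α := by positivity
    linarith
  refine ⟨_, hasDerivAt_integral_of_ae_exists (μ := μ) (s₀ := 0) (ε := ε)
    (G := fun s p => jetDensityDeriv q B (z p + s • v p) (w p))
    (bound := fun p => (16 * q + 4) * ((L + (2 * b)⁻¹) * (α + (2 * b)⁻¹)) ^ q *
      (2 * b) ^ (2 * q + 2) * β * γ * (ρ p ^ q / d p ^ (2 * q))) hε
    (fun s => (hmeas s).aestronglyMeasurable) ?_ (hΘ.const_mul _) ?_, ?_⟩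
  · refine Integrable.mono' (hΘ.const_mul (4 * (L * α) ^ q * b ^ (2 * q + 1) * γ))
      (hmeas 0).aestronglyMeasurable ?_
    filter_upwards [h] with p ⟨hd, hρ, h1, _, h2⟩
    rw [zero_smul, add_zero]
    exact abs_densityDeriv_le hq hB hb hd h1.1 hα hρ h1.2.1 h1.2.2 hbL hbα h2.1 h2.2.1 h2.2.2
  · filter_upwards [h, hnd] with p ⟨hd, hρ, _, h2, h3⟩ hp s hs
    exact exists_hasDerivAt_jetDensityDeriv_le hq hB (by positivity) hd (by positivity) hρ hbL' hbα'
      (hp s hs) h2 h3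
  · rw [← integral_const_mul, ← Real.norm_eq_abs]
    refine norm_integral_le_of_norm_le (hΘ.const_mul _) ?_
    filter_upwards [h] with p ⟨hd, hρ, h1, h2, h3⟩
    obtain ⟨m, hm, hmb⟩ := exists_hasDerivAt_jetDensityDeriv_le hq hB (s := 0) hb hd hα hρ hbL hbα
      (by rwa [zero_smul, add_zero]) h2 h3
    rwa [Real.norm_eq_abs, hm.deriv]

end SecondVariation

end Jets

section Curves

variable {n : ℕ} {q : ℝ} {f g : ℝ → EuclideanSpace ℝ (Fin n)}

/-- The triple of tangent, Taylor remainder and chord of a curve at a pair of points. -/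
def jet (f : ℝ → EuclideanSpace ℝ (Fin n)) (p : ℝ × ℝ) :
    EuclideanSpace ℝ (Fin n) × EuclideanSpace ℝ (Fin n) × EuclideanSpace ℝ (Fin n) :=
  (deriv f p.2, taylorRem f p.1 p.2, f p.1 - f p.2)

lemma measurable_taylorRem (hf : ContDiff ℝ 1 f) :
    Measurable fun p : ℝ × ℝ => taylorRem f p.1 p.2 := by
  have h1 := hf.continuous.measurable
  have h2 := (hf.continuous_deriv le_rfl).measurable
  have h3 := measurable_wrap
  unfold taylorRem
  fun_prop

lemma measurable_jet (hf : ContDiff ℝ 1 f) : Measurable (jet f) := by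
  have h1 := hf.continuous.measurable
  have h2 := (hf.continuous_deriv le_rfl).measurable
  have h3 := measurable_taylorRem hf
  unfold jet
  fun_prop

lemma jet_add_smul (hf : ContDiff ℝ 1 f) (hg : ContDiff ℝ 1 g) (s : ℝ) (p : ℝ × ℝ) :
    jet (fun x => f x + s • g x) p = jet f p + s • jet g p := by
  have hd : ∀ y, deriv (fun x => f x + s • g x) y = deriv f y + s • deriv g y := fun y => by
    have h1 := hf.differentiable one_ne_zero y
    have h2 := hg.differentiable one_ne_zero y
    rw [deriv_fun_add h1 (h2.fun_const_smul s), deriv_fun_const_smul s h2]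
  simp only [jet, taylorRem, hd, Prod.smul_mk, Prod.mk_add_mk, Prod.mk.injEq, true_and]
  constructor <;> module

lemma TPr_eq_integral_jetDensity {F : Type*} [NormedAddCommGroup F] [InnerProductSpace ℝ F]
    {B : EuclideanSpace ℝ (Fin n) →L[ℝ] EuclideanSpace ℝ (Fin n) →L[ℝ] F}
    (hB : ∀ a b, ‖B a b‖ ^ 2 = wedgeSq a b) (hq : 0 < q) (hf : ContDiff ℝ 1 f) :
    TPr q f = 1 / q * ∫ p in unitSq, jetDensity q B (jet f p) := by
  have hBa : ∀ a, B a a = 0 := fun a => by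
    have := hB a a
    rw [wedgeSq, real_inner_self_eq_norm_sq] at this
    have h0 : ‖B a a‖ ^ 2 = 0 := by rw [this]; ring
    simpa using h0
  have hpt : ∀ p : ℝ × ℝ, wedgeSq (deriv f p.2) (f p.1 - f p.2) ^ (q / 2) /
      ‖f p.1 - f p.2‖ ^ (2 * q) = jetDensity q B (jet f p) := fun p => by
    have h1 : f p.1 - f p.2 = taylorRem f p.1 p.2 + wrap (p.1 - p.2) • deriv f p.2 := by
      rw [taylorRem, sub_add_cancel]
    have h2 : B (deriv f p.2) (f p.1 - f p.2) = B (deriv f p.2) (taylorRem f p.1 p.2) := by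
      rw [h1, map_add, map_smul, hBa, smul_zero, add_zero]
    rw [← hB, h2, ← Real.rpow_natCast, ← Real.rpow_mul (norm_nonneg _), jetDensity, density, jet,
      Real.rpow_neg (norm_nonneg _), div_eq_mul_inv]
    congr 2
    push_cast
    ring
  rw [TPr, TPe, ENNReal.toReal_mul, ENNReal.toReal_ofReal (by positivity)]
  congr 1
  simp only [hpt]
  refine (integral_eq_lintegral_of_nonneg_ae (ae_of_all _ fun p => ?_) ?_).symm
  · unfold jetDensity density
    positivity
  · exact ((measurable_jetDensity q B).comp (measurable_jet hf)).aestronglyMeasurable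

lemma ae_circDist_pos : ∀ᵐ p : ℝ × ℝ, 0 < circDist p.1 p.2 := by
  have hs : MeasurableSet {p : ℝ × ℝ | ¬ 0 < circDist p.1 p.2} :=
    (measurableSet_lt measurable_const measurable_circDist).compl
  rw [ae_iff, Measure.volume_eq_prod, Measure.measure_prod_null hs]
  refine ae_of_all _ fun x => ?_
  refine Set.Countable.measure_zero (Set.Countable.mono ?_
    (countable_range fun k : ℤ => x + k)) _
  intro y hy
  have hy' : ¬ 0 < |wrap (x - y)| := by simpa [circDist_eq] using hy
  rw [abs_pos, not_not, wrap_eq] at hy'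
  exact ⟨⌊1 / 2 - (x - y)⌋, by simp only; linarith⟩

lemma norm_sub_le_circDist (hf : ContDiff ℝ 1 f) (hper : Function.Periodic f 1) {M : ℝ}
    (hM : ∀ x, ‖deriv f x‖ ≤ M) (x y : ℝ) : ‖f x - f y‖ ≤ M * circDist x y := by
  rw [hper.eq_wrap x y, circDist_eq]
  have := Convex.norm_image_sub_le_of_norm_deriv_le (𝕜 := ℝ) (f := f) (s := univ) (x := y)
    (y := y + wrap (x - y)) (C := M) (fun x _ => hf.differentiable one_ne_zero x)
    (fun x _ => hM x) convex_univ (mem_univ _) (mem_univ _)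
  simpa using this

lemma circDist_le_bil (h : bil f < ⊤) (x y : ℝ) :
    circDist x y ≤ (bil f).toReal * ‖f x - f y‖ := by
  rcases eq_or_ne (circDist x y) 0 with h0 | h0
  · rw [h0]
    positivity
  have hpos : 0 < circDist x y := lt_of_le_of_ne (norm_nonneg _) h0.symm
  have h1 : ENNReal.ofReal (circDist x y) / ENNReal.ofReal ‖f x - f y‖ ≤ bil f :=
    le_iSup_of_le x (le_iSup_of_le y (le_iSup_of_le h0 le_rfl))
  have h2 : 0 < ‖f x - f y‖ := by
    by_contra hc
    rw [ENNReal.ofReal_of_nonpos (not_lt.1 hc), ENNReal.div_zero (by simpa using hpos)] at h1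
    exact absurd h1 (not_le.2 h)
  rw [← ENNReal.ofReal_div_of_pos h2, ENNReal.ofReal_le_iff_le_toReal h.ne, div_le_iff₀ h2] at h1
  exact h1

lemma one_le_bil_mul_norm_deriv (hf : ContDiff ℝ 1 f) (h : bil f < ⊤) (y : ℝ) :
    1 ≤ (bil f).toReal * ‖deriv f y‖ := by
  have h1 := (hf.differentiable one_ne_zero y).hasDerivAt
  refine ge_of_tendsto (((hasDerivAt_iff_tendsto_slope.1 h1).norm).const_mul _) ?_
  have h2 : ∀ᶠ x in 𝓝[≠] y, x ∈ Metric.ball y (1 / 2) :=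
    nhdsWithin_le_nhds (Metric.ball_mem_nhds y (by norm_num))
  filter_upwards [h2, self_mem_nhdsWithin] with x hx hxy
  have h3 : 0 < |x - y| := abs_pos.2 (sub_ne_zero.2 hxy)
  have h4 := circDist_le_bil h x y
  have hx' := abs_lt.1 (show |x - y| < 1 / 2 by simpa [Real.dist_eq] using hx)
  rw [circDist_eq, wrap_of_mem ⟨hx'.1, hx'.2.le⟩] at h4
  rw [slope_def_module, norm_smul, norm_inv, Real.norm_eq_abs, mul_left_comm, inv_mul_eq_div]
  exact (one_le_div h3).2 h4

lemma periodic_deriv (hper : Function.Periodic f 1) : Function.Periodic (deriv f) 1 := fun x => by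
  rw [← deriv_comp_add_const]
  congr 1
  exact funext hper

lemma integral_norm_rpow_le_Wnorm (s q : ℝ) (f : ℝ → EuclideanSpace ℝ (Fin n)) :
    (∫ x in Ioc (0 : ℝ) 1, ‖f x‖ ^ q) ^ (1 / q) ≤ Wnorm s q f :=
  le_add_of_nonneg_right (by positivity)

lemma sobSemPow_le_Wnorm {s : ℝ} (hq : 0 < q) (hs : sobSemPow s q f < ⊤) {N : ℝ}
    (hN : Wnorm s q f ≤ N) : sobSemPow s q f ≤ ENNReal.ofReal (N ^ q) := by
  have h0 : 0 ≤ ∫ x in Ioc (0 : ℝ) 1, ‖f x‖ ^ q := by positivity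
  have h1 : (sobSemPow s q f).toReal ^ (1 / q) ≤ N :=
    (le_add_of_nonneg_left (by positivity)).trans hN
  rw [← ENNReal.ofReal_toReal hs.ne]
  apply ENNReal.ofReal_le_ofReal
  have h2 := Real.rpow_le_rpow (by positivity) h1 hq.le
  rwa [← Real.rpow_mul ENNReal.toReal_nonneg, one_div_mul_cancel hq.ne', Real.rpow_one] at h2

lemma lintegral_norm_rpow_le_Wnorm {s : ℝ} (hq : 0 < q) (hf : Continuous f) {N : ℝ}
    (hN : Wnorm s q f ≤ N) :
    ∫⁻ x in Ioc (0 : ℝ) 1, ENNReal.ofReal (‖f x‖ ^ q) ≤ ENNReal.ofReal (N ^ q) := by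
  have hc : Continuous fun t => ‖f t‖ ^ q := hf.norm.rpow_const fun _ => Or.inr hq.le
  have hi : IntegrableOn (fun t => ‖f t‖ ^ q) (Ioc 0 1) :=
    hc.integrableOn_Icc.mono_set Ioc_subset_Icc_self
  rw [← ofReal_integral_eq_lintegral_ofReal hi (ae_of_all _ fun t => by positivity)]
  apply ENNReal.ofReal_le_ofReal
  have h0 : 0 ≤ ∫ x in Ioc (0 : ℝ) 1, ‖f x‖ ^ q := by positivity
  have h2 := Real.rpow_le_rpow (by positivity) ((integral_norm_rpow_le_Wnorm s q f).trans hN) hq.le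
  rwa [← Real.rpow_mul h0, one_div_mul_cancel hq.ne', Real.rpow_one] at h2

lemma le_Wnorm_of_forall_le {s c : ℝ} (hq : 0 < q) (hf : Continuous f) (hc : 0 ≤ c)
    (h : ∀ x, c ≤ ‖f x‖) : c ≤ Wnorm s q f := by
  refine le_trans ?_ (integral_norm_rpow_le_Wnorm s q f)
  have hcont : Continuous fun t => ‖f t‖ ^ q := hf.norm.rpow_const fun _ => Or.inr hq.le
  have hi : IntegrableOn (fun t => ‖f t‖ ^ q) (Ioc 0 1) :=
    hcont.integrableOn_Icc.mono_set Ioc_subset_Icc_self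
  have h1 : c ^ q ≤ ∫ x in Ioc (0 : ℝ) 1, ‖f x‖ ^ q := by
    have := setIntegral_mono_on (f := fun _ => c ^ q) (integrableOn_const (by simp)) hi
      measurableSet_Ioc fun x _ => Real.rpow_le_rpow hc (h x) hq.le
    simpa using this
  have h2 := Real.rpow_le_rpow (by positivity) h1 (show 0 ≤ 1 / q by positivity)
  rwa [← Real.rpow_mul hc, mul_one_div_cancel hq.ne', Real.rpow_one] at h2

lemma integrable_taylorRem (hf : ContDiff ℝ 1 f) (hper : Function.Periodic f 1) (hq : 2 < q)
    {N : ℝ} (hN : 0 < N) (hs : sobSemPow (1 - 1 / q) q (deriv f) ≤ ENNReal.ofReal (N ^ q)) :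
    IntegrableOn (fun p : ℝ × ℝ => (‖taylorRem f p.1 p.2‖ / N) ^ q / circDist p.1 p.2 ^ (2 * q))
      unitSq ∧
    ∫ p in unitSq, (‖taylorRem f p.1 p.2‖ / N) ^ q / circDist p.1 p.2 ^ (2 * q) ≤ 1 := by
  have hd : ∀ p : ℝ × ℝ, 0 ≤ circDist p.1 p.2 := fun p => norm_nonneg _
  have hnn : ∀ p : ℝ × ℝ,
      0 ≤ (‖taylorRem f p.1 p.2‖ / N) ^ q / circDist p.1 p.2 ^ (2 * q) := fun p => by
    have := hd p
    positivity
  have hmt := measurable_taylorRem hf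
  have hmc := measurable_circDist
  have hm : Measurable fun p : ℝ × ℝ =>
      (‖taylorRem f p.1 p.2‖ / N) ^ q / circDist p.1 p.2 ^ (2 * q) := by fun_prop
  have hle : ∫⁻ p in unitSq, ENNReal.ofReal
      ((‖taylorRem f p.1 p.2‖ / N) ^ q / circDist p.1 p.2 ^ (2 * q)) ≤ 1 := by
    calc _ = ENNReal.ofReal (N ^ q)⁻¹ * ∫⁻ p in unitSq, ENNReal.ofReal
          (‖taylorRem f p.1 p.2‖ ^ q / circDist p.1 p.2 ^ (2 * q)) := by
          rw [← lintegral_const_mul' _ _ ENNReal.ofReal_ne_top]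
          congr 1 with p
          rw [← ENNReal.ofReal_mul (by positivity), Real.div_rpow (norm_nonneg _) hN.le]
          congr 1
          ring
      _ ≤ ENNReal.ofReal (N ^ q)⁻¹ * ENNReal.ofReal (N ^ q) := by
          gcongr
          exact (lintegral_taylorRem_le hf hper hq).trans hs
      _ = 1 := by
          rw [← ENNReal.ofReal_mul (by positivity), inv_mul_cancel₀ (by positivity),
            ENNReal.ofReal_one]
  refine ⟨⟨hm.aestronglyMeasurable, ?_⟩, ?_⟩
  · rw [hasFiniteIntegral_iff_ofReal (ae_of_all _ hnn)]
    exact hle.trans_lt ENNReal.one_lt_top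
  · rw [integral_eq_lintegral_of_nonneg_ae (ae_of_all _ hnn) hm.aestronglyMeasurable]
    exact ENNReal.toReal_mono ENNReal.one_ne_top hle

lemma exists_weight {u v w : ℝ → EuclideanSpace ℝ (Fin n)} (hq : 2 < q)
    (hu : ContDiff ℝ 1 u) (hup : Function.Periodic u 1)
    (hv : ContDiff ℝ 1 v) (hvp : Function.Periodic v 1)
    (hw : ContDiff ℝ 1 w) (hwp : Function.Periodic w 1) {α β γ : ℝ}
    (hα : 0 < α) (hβ : 0 < β) (hγ : 0 < γ)
    (hsu : sobSemPow (1 - 1 / q) q (deriv u) ≤ ENNReal.ofReal (α ^ q))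
    (hsv : sobSemPow (1 - 1 / q) q (deriv v) ≤ ENNReal.ofReal (β ^ q))
    (hsw : sobSemPow (1 - 1 / q) q (deriv w) ≤ ENNReal.ofReal (γ ^ q)) :
    ∃ ρ : ℝ × ℝ → ℝ, (∀ p, 0 ≤ ρ p ∧ ‖taylorRem u p.1 p.2‖ ≤ α * ρ p ∧
        ‖taylorRem v p.1 p.2‖ ≤ β * ρ p ∧ ‖taylorRem w p.1 p.2‖ ≤ γ * ρ p) ∧
      IntegrableOn (fun p => ρ p ^ q / circDist p.1 p.2 ^ (2 * q)) unitSq ∧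
      ∫ p in unitSq, ρ p ^ q / circDist p.1 p.2 ^ (2 * q) ≤ 3 := by
  obtain ⟨iu, hiu⟩ := integrable_taylorRem hu hup hq hα hsu
  obtain ⟨iv, hiv⟩ := integrable_taylorRem hv hvp hq hβ hsv
  obtain ⟨iw, hiw⟩ := integrable_taylorRem hw hwp hq hγ hsw
  have hmu := measurable_taylorRem hu
  have hmv := measurable_taylorRem hv
  have hmw := measurable_taylorRem hw
  have hmc := measurable_circDist
  set ρ : ℝ × ℝ → ℝ := fun p => max (‖taylorRem u p.1 p.2‖ / α)
    (max (‖taylorRem v p.1 p.2‖ / β) (‖taylorRem w p.1 p.2‖ / γ)) with hρ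
  have hρ0 : ∀ p, 0 ≤ ρ p := fun p => le_max_of_le_left (by positivity)
  have hd : ∀ p : ℝ × ℝ, 0 ≤ circDist p.1 p.2 := fun p => norm_nonneg _
  have hm : Measurable fun p : ℝ × ℝ => ρ p ^ q / circDist p.1 p.2 ^ (2 * q) := by
    simp only [hρ]
    fun_prop
  have hle : ∀ p : ℝ × ℝ, ρ p ^ q / circDist p.1 p.2 ^ (2 * q) ≤
      (‖taylorRem u p.1 p.2‖ / α) ^ q / circDist p.1 p.2 ^ (2 * q) +
      (‖taylorRem v p.1 p.2‖ / β) ^ q / circDist p.1 p.2 ^ (2 * q) +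
      (‖taylorRem w p.1 p.2‖ / γ) ^ q / circDist p.1 p.2 ^ (2 * q) := fun p => by
    rw [← add_div, ← add_div]
    have := hd p
    gcongr
    have h1 : 0 ≤ (‖taylorRem u p.1 p.2‖ / α) ^ q := by positivity
    have h2 : 0 ≤ (‖taylorRem v p.1 p.2‖ / β) ^ q := by positivity
    have h3 : 0 ≤ (‖taylorRem w p.1 p.2‖ / γ) ^ q := by positivity
    simp only [hρ]
    rcases max_choice (‖taylorRem u p.1 p.2‖ / α)
      (max (‖taylorRem v p.1 p.2‖ / β) (‖taylorRem w p.1 p.2‖ / γ)) with h | h <;> rw [h]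
    · linarith
    · rcases max_choice (‖taylorRem v p.1 p.2‖ / β) (‖taylorRem w p.1 p.2‖ / γ) with h | h <;>
        rw [h] <;> linarith
  have hi : IntegrableOn (fun p => ρ p ^ q / circDist p.1 p.2 ^ (2 * q)) unitSq := by
    refine Integrable.mono' ((iu.add iv).add iw) hm.aestronglyMeasurable (ae_of_all _ fun p => ?_)
    have h1 := hd p
    have h2 := hρ0 p
    rw [Real.norm_eq_abs, abs_of_nonneg (by positivity)]
    exact hle p
  refine ⟨ρ, fun p => ⟨hρ0 p, ?_, ?_, ?_⟩, hi, ?_⟩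
  · rw [← div_le_iff₀' hα]
    exact le_max_left _ _
  · rw [← div_le_iff₀' hβ]
    exact (le_max_left _ _).trans (le_max_right _ _)
  · rw [← div_le_iff₀' hγ]
    exact (le_max_right _ _).trans (le_max_right _ _)
  · refine (integral_mono hi ((iu.add iv).add iw) hle).trans ?_
    have e1 := integral_add (iu.add iv) iw
    have e2 := integral_add iu iv
    simp only [Pi.add_apply] at e1 e2 ⊢
    rw [e1, e2]
    linarith

end Curves

lemma norm_deriv_le_linfD {n : ℕ} {u : ℝ → EuclideanSpace ℝ (Fin n)} {M : ℝ}
    (hM : ∀ x, ‖deriv u x‖ ≤ M) (x : ℝ) : ‖deriv u x‖ ≤ (linfD u).toReal := by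
  have hfin : linfD u ≤ ENNReal.ofReal M := iSup_le fun y => by
    rw [← ENNReal.ofReal_coe_nnreal, coe_nnnorm]
    exact ENNReal.ofReal_le_ofReal (hM y)
  have h := ENNReal.toReal_mono (hfin.trans_lt ENNReal.ofReal_lt_top).ne
    (le_iSup (fun y => (‖deriv u y‖₊ : ℝ≥0∞)) x)
  simpa using h

/-- Proposition 3.10, second variation: the mixed second partial
derivative `δ²TP(u)[v,w] = ∂²/∂s∂t TP(u + s v + t w)|_{(0,0)}` exists and satisfies
`|δ²TP(u)[v,w]| ≤ C (bil u)^{2q+4} ‖u'‖_{L^∞}^{q+2} ‖u'‖_{W^{1-1/q,q}}^q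
‖v'‖_{W^{1-1/q,q}} ‖w'‖_{W^{1-1/q,q}}` with `C = C(n, q)`. -/
theorem second_variation_estimate (n : ℕ) (q : ℝ) (hq : 2 < q) :
    ∃ C : ℝ, 0 < C ∧ ∀ u v w : ℝ → EuclideanSpace ℝ (Fin n),
      ContDiff ℝ 1 u → Function.Periodic u 1 → Embedded u → Regular u →
      bil u < ⊤ → sobSemPow (1 - 1 / q) q (deriv u) < ⊤ →
      ContDiff ℝ 1 v → Function.Periodic v 1 →
      sobSemPow (1 - 1 / q) q (deriv v) < ⊤ →
      ContDiff ℝ 1 w → Function.Periodic w 1 →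
      sobSemPow (1 - 1 / q) q (deriv w) < ⊤ →
      ∃ (D : ℝ → ℝ) (d2 : ℝ),
        (∀ᶠ s in nhds (0 : ℝ),
          HasDerivAt (fun t : ℝ => TPr q (fun x => u x + s • v x + t • w x)) (D s) 0) ∧
        HasDerivAt D d2 0 ∧
        |d2| ≤ C * (bil u).toReal ^ (2 * q + 4) * (linfD u).toReal ^ (q + 2) *
          Wnorm (1 - 1 / q) q (deriv u) ^ q *
          Wnorm (1 - 1 / q) q (deriv v) * Wnorm (1 - 1 / q) q (deriv w) := by
  obtain ⟨B, hBw⟩ := exists_wedge n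
  obtain ⟨K, hK, hsob⟩ := norm_le_of_sobSemPow_le (n := n) hq
  have hB : ∀ x y, ‖B x y‖ ≤ ‖x‖ * ‖y‖ := fun x y => by
    refine abs_le_of_sq_le_sq' ?_ (by positivity) |>.2
    rw [hBw, wedgeSq, mul_pow]
    linarith [sq_nonneg ⟪x, y⟫]
  have hq0 : 0 < q := by linarith
  refine ⟨3 * (16 * q + 4) * K ^ 2, by positivity, ?_⟩
  intro u v w hu hup _ _ hbil hsu hv hvp hsv hw hwp hsw
  have hdu := hu.continuous_deriv le_rfl
  have hdv := hv.continuous_deriv le_rfl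
  have hdw := hw.continuous_deriv le_rfl
  set s₀ := 1 - 1 / q
  set b := (bil u).toReal
  set L := (linfD u).toReal
  set α := Wnorm s₀ q (deriv u)
  set Wv := Wnorm s₀ q (deriv v)
  set Ww := Wnorm s₀ q (deriv w)
  have hbu : ∀ y, 1 ≤ b * ‖deriv u y‖ := one_le_bil_mul_norm_deriv hu hbil
  have hb : 0 < b := by
    refine lt_of_le_of_ne ENNReal.toReal_nonneg fun h => ?_
    have := hbu 0
    rw [← h, zero_mul] at this
    linarith
  have hαb : b⁻¹ ≤ α := le_Wnorm_of_forall_le hq0 hdu (by positivity) fun x =>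
    (inv_le_iff_one_le_mul₀' hb).2 (hbu x)
  have hbα : 1 ≤ b * α := (inv_le_iff_one_le_mul₀' hb).1 hαb
  have hα : 0 < α := lt_of_lt_of_le (by positivity) hαb
  have hWv : 0 ≤ Wv := le_Wnorm_of_forall_le hq0 hdv le_rfl fun x => norm_nonneg _
  have hWw : 0 ≤ Ww := le_Wnorm_of_forall_le hq0 hdw le_rfl fun x => norm_nonneg _
  have hbound : ∀ f : ℝ → EuclideanSpace ℝ (Fin n), ContDiff ℝ 1 f → Function.Periodic f 1 →
      sobSemPow s₀ q (deriv f) < ⊤ → ∀ N, 0 < N → Wnorm s₀ q (deriv f) ≤ N →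
      ∀ x, ‖deriv f x‖ ≤ K * N := fun f hf hfp hs N hN hWN =>
    hsob _ N (hf.continuous_deriv le_rfl) (periodic_deriv hfp) hN (sobSemPow_le_Wnorm hq0 hs hWN)
      (lintegral_norm_rpow_le_Wnorm hq0 (hf.continuous_deriv le_rfl) hWN)
  have hL : ∀ x, ‖deriv u x‖ ≤ L := norm_deriv_le_linfD (hbound u hu hup hsu α hα le_rfl)
  have hL0 : 0 ≤ L := ENNReal.toReal_nonneg
  have hbL : 1 ≤ b * L := (hbu 0).trans (by gcongr; exact hL 0)
  have hdata : ∀ ε > 0, ∃ ρ : ℝ × ℝ → ℝ,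
      (∀ᵐ p ∂volume.restrict unitSq, 0 < circDist p.1 p.2 ∧ 0 ≤ ρ p ∧
        JetNondeg L α b (ρ p) (circDist p.1 p.2) (jet u p) ∧
        JetBound (K * (Wv + ε)) (ρ p) (circDist p.1 p.2) (jet v p) ∧
        JetBound (K * (Ww + ε)) (ρ p) (circDist p.1 p.2) (jet w p)) ∧
      IntegrableOn (fun p => ρ p ^ q / circDist p.1 p.2 ^ (2 * q)) unitSq ∧
      ∫ p in unitSq, ρ p ^ q / circDist p.1 p.2 ^ (2 * q) ≤ 3 := fun ε hε => by
    obtain ⟨ρ, hρ, hi, h3⟩ := exists_weight hq hu hup hv hvp hw hwp hα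
      (add_pos_of_nonneg_of_pos hWv hε) (add_pos_of_nonneg_of_pos hWw hε)
      (sobSemPow_le_Wnorm hq0 hsu le_rfl) (sobSemPow_le_Wnorm hq0 hsv (by linarith))
      (sobSemPow_le_Wnorm hq0 hsw (by linarith))
    have hjet : ∀ f : ℝ → EuclideanSpace ℝ (Fin n), ContDiff ℝ 1 f → Function.Periodic f 1 →
        ∀ N, 0 < N → (∀ x, ‖deriv f x‖ ≤ K * N) →
        (∀ p : ℝ × ℝ, ‖taylorRem f p.1 p.2‖ ≤ N * ρ p) →
        ∀ p, JetBound (K * N) (ρ p) (circDist p.1 p.2) (jet f p) :=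
      fun f hf hfp N hN hfN hR p =>
        ⟨hfN p.2, (hR p).trans (mul_le_mul_of_nonneg_right (le_mul_of_one_le_left hN.le hK) (hρ p).1),
          norm_sub_le_circDist hf hfp hfN p.1 p.2⟩
    refine ⟨ρ, ?_, hi, h3⟩
    filter_upwards [ae_restrict_of_ae ae_circDist_pos] with p hp
    obtain ⟨h0, h1, -, -⟩ := hρ p
    refine ⟨hp, h0, ⟨hL p.2, h1, (div_le_iff₀' hb).2 (circDist_le_bil hbil p.1 p.2)⟩, ?_, ?_⟩
    · exact hjet v hv hvp (Wv + ε) (by positivity)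
        (hbound v hv hvp hsv _ (by positivity) (by linarith)) (fun p => (hρ p).2.2.1) p
    · exact hjet w hw hwp (Ww + ε) (by positivity)
        (hbound w hw hwp hsw _ (by positivity) (by linarith)) (fun p => (hρ p).2.2.2) p
  have hmu := measurable_jet hu
  have hmv := measurable_jet hv
  have hmw := measurable_jet hw
  set D : ℝ → ℝ := fun s => ∫ p in unitSq, jetDensityDeriv q B (jet u p + s • jet v p) (jet w p)
  have hD : ∀ ε > 0, ∃ m, HasDerivAt D m 0 ∧ |m| ≤ (16 * q + 4) * (L * α) ^ q * b ^ (2 * q + 2) *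
      (K * (Wv + ε)) * (K * (Ww + ε)) * 3 := fun ε hε => by
    obtain ⟨ρ, hρ, hi, h3⟩ := hdata ε hε
    obtain ⟨m, hm, hmb⟩ := hasDerivAt_integral_jetDensityDeriv hq hB hmu hmv hmw hL0 hα.le hb
      (by positivity) hbL hbα hρ hi
    refine ⟨m, hm, hmb.trans ?_⟩
    gcongr
  refine ⟨D, deriv D 0, ?_, ?_, ?_⟩
  · obtain ⟨ρ, hρ, hi, -⟩ := hdata 1 one_pos
    filter_upwards [eventually_hasDerivAt_integral_jetDensity hq hB hmu hmv hmw hL0 hα.le hb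
      (by positivity) (by positivity) hρ hi] with s hs
    have hT : ∀ t : ℝ, TPr q (fun x => u x + s • v x + t • w x) =
        1 / q * ∫ p in unitSq, jetDensity q B (jet u p + s • jet v p + t • jet w p) := fun t => by
      have huv : ContDiff ℝ 1 fun x => u x + s • v x := hu.add (hv.const_smul s)
      rw [TPr_eq_integral_jetDensity hBw hq0 (huv.add (hw.const_smul t))]
      simp only [jet_add_smul huv hw, jet_add_smul hu hv]
    simp only [hT]
    refine (hs.const_mul (1 / q)).congr_deriv ?_
    rw [← mul_assoc, one_div_mul_cancel hq0.ne', one_mul]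
  · obtain ⟨m, hm, -⟩ := hD 1 one_pos
    exact hm.differentiableAt.hasDerivAt
  · have hlim : Tendsto (fun ε : ℝ => (16 * q + 4) * (L * α) ^ q * b ^ (2 * q + 2) *
        (K * (Wv + ε)) * (K * (Ww + ε)) * 3) (𝓝[>] 0) (𝓝 ((16 * q + 4) * (L * α) ^ q *
        b ^ (2 * q + 2) * (K * (Wv + 0)) * (K * (Ww + 0)) * 3)) :=
      tendsto_nhdsWithin_of_tendsto_nhds (Continuous.tendsto (by fun_prop) 0)
    have hle : |deriv D 0| ≤ (16 * q + 4) * (L * α) ^ q * b ^ (2 * q + 2) * (K * (Wv + 0)) *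
        (K * (Ww + 0)) * 3 := by
      refine ge_of_tendsto hlim ?_
      filter_upwards [self_mem_nhdsWithin] with ε hε
      obtain ⟨m, hm, hmb⟩ := hD ε hε
      rwa [hm.deriv]
    refine hle.trans ?_
    have hL' : 0 < L := by
      by_contra hc
      rw [le_antisymm (not_lt.1 hc) hL0, mul_zero] at hbL
      linarith
    have e1 : b ^ (2 * q + 4) = b ^ (2 * q + 2) * b ^ 2 := by
      rw [← Real.rpow_natCast, ← Real.rpow_add hb]
      congr 1
      push_cast
      ring
    have e2 : L ^ (q + 2) = L ^ q * L ^ 2 := by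
      rw [← Real.rpow_natCast, ← Real.rpow_add hL']
      congr 1
    have e3 : 1 ≤ (b * L) ^ 2 := one_le_pow₀ hbL
    rw [e1, e2, Real.mul_rpow hL0 hα.le, add_zero, add_zero]
    calc _ = 3 * (16 * q + 4) * K ^ 2 * b ^ (2 * q + 2) * L ^ q * α ^ q * Wv * Ww * 1 := by ring
      _ ≤ 3 * (16 * q + 4) * K ^ 2 * b ^ (2 * q + 2) * L ^ q * α ^ q * Wv * Ww * (b * L) ^ 2 := by
        gcongr
      _ = _ := by ring
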